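/- arXiv:1908.08826 — 2 statements merged into one kernel-verified Lean document; each statement's English description precedes it below -/
import Mathlib

section
/- A one-relator group G = ⟨g₁,…,g_n | r^m⟩ with n ≥ 1, m ≥ 1 and r not a proper power has Euler characteristic χ(G) = 1 − n + 1/m. Consequently, if n ≥ 2 then χ(G) ≤ 0, and χ(G) = 0 if and only if n = 2 and m = 1 (or n = 1 and the relator is trivial-like with m arbitrary giving 1/m = n − 1). -/
open CategoryTheory

noncomputable def trivialZMod (G : Type) [Group G] : ModuleCat (MonoidAlgebra ℤ G) :=
  (Rep.equivalenceModuleMonoidAlgebra.functor.obj (Rep.trivial ℤ G ℤ))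

def TypeFP (G : Type) [Group G] : Prop :=
  ∃ (P : ProjectiveResolution (trivialZMod G)) (n : ℕ),
    (∀ i, Module.Finite (MonoidAlgebra ℤ G) (P.complex.X i)) ∧
    ∀ i, n < i → Subsingleton (P.complex.X i)

def TypeVFP (G : Type) [Group G] : Prop :=
  ∃ K : Subgroup G, K.index ≠ 0 ∧ TypeFP K

/-- `HasFreeResOfRanks G n r`: the trivial `ℤG`-module `ℤ` admits a free resolution of
length `≤ n` in which the `i`-th module is free of finite rank `r i`. -/
def HasFreeResOfRanks (G : Type) [Group G] (n : ℕ) (r : ℕ → ℕ) : Prop :=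
  ∃ P : ProjectiveResolution (trivialZMod G),
    (∀ i, Nonempty ((P.complex.X i) ≃ₗ[MonoidAlgebra ℤ G]
      (Fin (r i) →₀ MonoidAlgebra ℤ G))) ∧
    ∀ i, n < i → r i = 0

/-- `EulerCharRel G q` asserts that the Euler characteristic of the type-`VFP` group `G`
(in the sense of Brown) equals the rational number `q`: some finite-index subgroup `K`
has a finite free resolution of the trivial module, and `q` is the alternating sum of
the ranks divided by the index `[G : K]`. -/
def EulerCharRel (G : Type) [Group G] (q : ℚ) : Prop :=
  ∃ (K : Subgroup G) (n : ℕ) (r : ℕ → ℕ), K.index ≠ 0 ∧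
    HasFreeResOfRanks K n r ∧
    q = (∑ i ∈ Finset.range (n + 1), (-1 : ℚ) ^ i * r i) / K.index

/-- A cyclic word `letter` of length `L` together with a linear ordering of its positions which
is compatible with the letters: two passages through the same edge do not cross. -/
structure StackedWord (α : Type*) (L : ℕ) (Λ : Type*) [LinearOrder Λ] where
  letter : ZMod L → α × Bool
  rank : ZMod L → Λ
  rank_injective : Function.Injective rank
  not_cancel : ∀ j k, (letter j).1 = (letter k).1 →
    (bif (letter j).2 then j else j + 1) = (bif (letter k).2 then k else k + 1) → j = k
  noncrossing : ∀ j k, (letter j).1 = (letter k).1 →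
    (rank (bif (letter j).2 then j else j + 1) ≤ rank (bif (letter k).2 then k else k + 1) ↔
      rank (bif (letter j).2 then j + 1 else j) ≤ rank (bif (letter k).2 then k + 1 else k))

namespace StackedWord

variable {α Λ V : Type*} [LinearOrder Λ] {L : ℕ} (W : StackedWord α L Λ)

/-- The same word with the reversed order on positions. -/
def dual : StackedWord α L Λᵒᵈ where
  letter := W.letter
  rank j := OrderDual.toDual (W.rank j)
  rank_injective := fun _ _ h => W.rank_injective h
  not_cancel := W.not_cancel
  noncrossing j k h := by
    simpa only [OrderDual.toDual_le_toDual] using W.noncrossing k j h.symm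

/-- The permutation of vertices of a labelled graph given by moving along a signed letter. -/
def letterPerm (step : α → Equiv.Perm V) (y : α × Bool) : Equiv.Perm V :=
  bif y.2 then step y.1 else (step y.1)⁻¹

/-- Moving one letter forward along the word `W`, which is being read at a vertex. -/
def next (step : α → Equiv.Perm V) : Equiv.Perm (V × ZMod L) where
  toFun o := (letterPerm step (W.letter o.2) o.1, o.2 + 1)
  invFun o := ((letterPerm step (W.letter (o.2 - 1)))⁻¹ o.1, o.2 - 1)
  left_inv o := by simp
  right_inv o := by simp

variable (step : α → Equiv.Perm V)

lemma next_apply (o : V × ZMod L) :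
    W.next step o = (letterPerm step (W.letter o.2) o.1, o.2 + 1) := rfl

/-- The passage at the initial vertex of the edge traversed after `o`. -/
def source (o : V × ZMod L) : V × ZMod L := bif (W.letter o.2).2 then o else W.next step o

/-- The passage at the terminal vertex of the edge traversed after `o`. -/
def target (o : V × ZMod L) : V × ZMod L := bif (W.letter o.2).2 then W.next step o else o

/-- The edge traversed after `o`. -/
def edge (o : V × ZMod L) : V × α := ((W.source step o).1, (W.letter o.2).1)

lemma source_snd (o : V × ZMod L) :
    (W.source step o).2 = bif (W.letter o.2).2 then o.2 else o.2 + 1 := by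
  unfold source; cases (W.letter o.2).2 <;> rfl

lemma target_snd (o : V × ZMod L) :
    (W.target step o).2 = bif (W.letter o.2).2 then o.2 + 1 else o.2 := by
  unfold target; cases (W.letter o.2).2 <;> rfl

lemma target_fst (o : V × ZMod L) :
    (W.target step o).1 = step (W.letter o.2).1 (W.source step o).1 := by
  unfold target source
  cases h : (W.letter o.2).2 <;> simp [next_apply, letterPerm, h]

lemma source_fst_eq {o o' : V × ZMod L} (h : W.edge step o = W.edge step o') :
    (W.source step o).1 = (W.source step o').1 :=
  congrArg (fun e : V × α => e.1) h

lemma target_fst_eq {o o' : V × ZMod L} (h : W.edge step o = W.edge step o') :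
    (W.target step o).1 = (W.target step o').1 := by
  simp only [edge, Prod.mk.injEq] at h
  rw [target_fst, target_fst, h.1, h.2]

lemma eq_of_edge_eq {o o' : V × ZMod L} (h : W.edge step o = W.edge step o')
    (hr : W.rank (W.source step o).2 = W.rank (W.source step o').2) : o = o' := by
  have h1 := W.rank_injective hr
  have h2 : o.2 = o'.2 := by
    refine W.not_cancel _ _ (congrArg Prod.snd h) ?_
    rwa [source_snd, source_snd] at h1
  have hf := W.source_fst_eq step h
  have h3 : W.source step o = W.source step o' := Prod.ext hf h1
  have ht : W.target step o = W.target step o' :=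
    Prod.ext (W.target_fst_eq step h) (by rw [target_snd, target_snd, h2])
  unfold source at h3
  unfold target at ht
  rw [h2] at h3 ht
  cases hb : (W.letter o'.2).2
  · simpa [hb] using ht
  · simpa [hb] using h3

lemma rank_target_le_iff {o o' : V × ZMod L} (h : W.edge step o = W.edge step o') :
    W.rank (W.source step o).2 ≤ W.rank (W.source step o').2 ↔
      W.rank (W.target step o).2 ≤ W.rank (W.target step o').2 := by
  rw [source_snd, source_snd, target_snd, target_snd]
  exact W.noncrossing _ _ (congrArg Prod.snd h)

/-- `o` is the highest passage of `O` at its vertex. -/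
def VertexTop (O : Finset (V × ZMod L)) (o : V × ZMod L) : Prop :=
  ∀ o' ∈ O, o'.1 = o.1 → W.rank o'.2 ≤ W.rank o.2

/-- The edge following `o` is the highest passage of `O` at that edge. -/
def EdgeTop (O : Finset (V × ZMod L)) (o : V × ZMod L) : Prop :=
  ∀ o' ∈ O, W.edge step o' = W.edge step o →
    W.rank (W.source step o').2 ≤ W.rank (W.source step o).2

variable {W step} {O : Finset (V × ZMod L)}

lemma source_mem (hO : ∀ o, W.next step o ∈ O ↔ o ∈ O) {o} (ho : o ∈ O) :
    W.source step o ∈ O := by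
  unfold source; cases (W.letter o.2).2 <;> simp [hO, ho]

lemma target_mem (hO : ∀ o, W.next step o ∈ O ↔ o ∈ O) {o} (ho : o ∈ O) :
    W.target step o ∈ O := by
  unfold target; cases (W.letter o.2).2 <;> simp [hO, ho]

lemma EdgeTop.of_source (hO : ∀ o, W.next step o ∈ O ↔ o ∈ O) {o}
    (h : W.VertexTop O (W.source step o)) : W.EdgeTop step O o :=
  fun _ ho' he => h _ (source_mem hO ho') (W.source_fst_eq step he)

lemma EdgeTop.of_target (hO : ∀ o, W.next step o ∈ O ↔ o ∈ O) {o}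
    (h : W.VertexTop O (W.target step o)) : W.EdgeTop step O o :=
  fun _ ho' he => (W.rank_target_le_iff step he).2
    (h _ (target_mem hO ho') (W.target_fst_eq step he))

lemma VertexTop.edgeTop (hO : ∀ o, W.next step o ∈ O ↔ o ∈ O) {o}
    (h : W.VertexTop O o) : W.EdgeTop step O o := by
  cases hb : (W.letter o.2).2
  · exact .of_target hO (by simpa [target, hb] using h)
  · exact .of_source hO (by simpa [source, hb] using h)

lemma VertexTop.edgeTop_of_next (hO : ∀ o, W.next step o ∈ O ↔ o ∈ O) {o}
    (h : W.VertexTop O (W.next step o)) : W.EdgeTop step O o := by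
  cases hb : (W.letter o.2).2
  · exact .of_source hO (by simpa [source, hb] using h)
  · exact .of_target hO (by simpa [target, hb] using h)

lemma EdgeTop.eq {o o'} (h : W.EdgeTop step O o) (ho : o ∈ O)
    (h' : W.EdgeTop step O o') (ho' : o' ∈ O) (he : W.edge step o = W.edge step o') : o = o' :=
  W.eq_of_edge_eq step he (le_antisymm (h' _ ho he) (h _ ho' he.symm))

lemma VertexTop.eq {o o'} (h : W.VertexTop O o) (ho : o ∈ O)
    (h' : W.VertexTop O o') (ho' : o' ∈ O) (he : o.1 = o'.1) : o = o' :=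
  Prod.ext he (W.rank_injective (le_antisymm (h' _ ho he) (h _ ho' he.symm)))

lemma exists_vertexTop {o} (ho : o ∈ O) : ∃ o' ∈ O, o'.1 = o.1 ∧ W.VertexTop O o' := by
  classical
  obtain ⟨o', h, hmax⟩ := (O.filter (fun p => p.1 = o.1)).exists_max_image (fun p => W.rank p.2)
    ⟨o, by simp [ho]⟩
  simp only [Finset.mem_filter] at h hmax
  exact ⟨o', h.1, h.2, fun p hp hpe => hmax p ⟨hp, hpe.trans h.2⟩⟩

lemma exists_edgeTop {o} (ho : o ∈ O) :
    ∃ o' ∈ O, W.edge step o' = W.edge step o ∧ W.EdgeTop step O o' := by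
  classical
  obtain ⟨o', h, hmax⟩ := (O.filter (fun p => W.edge step p = W.edge step o)).exists_max_image
    (fun p => W.rank (W.source step p).2) ⟨o, by simp [ho]⟩
  simp only [Finset.mem_filter] at h hmax
  exact ⟨o', h.1, h.2, fun p hp hpe => hmax p ⟨hp, hpe.trans h.2⟩⟩

lemma next_pow_snd (o : V × ZMod L) (t : ℕ) : ((W.next step ^ t) o).2 = o.2 + t := by
  induction t with
  | zero => simp
  | succ t ih => rw [pow_succ', Equiv.Perm.mul_apply, next_apply, ih]; push_cast; ring

lemma next_pow_mem (hO : ∀ o, W.next step o ∈ O ↔ o ∈ O) {o} (ho : o ∈ O) (t : ℕ) :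
    (W.next step ^ t) o ∈ O := by
  induction t with
  | zero => simpa
  | succ t ih => rwa [pow_succ', Equiv.Perm.mul_apply, hO]

lemma exists_next_pow_snd [NeZero L] (o : V × ZMod L) (j : ZMod L) :
    ∃ t : ℕ, ((W.next step ^ t) o).2 = j :=
  ⟨(j - o.2).val, by rw [next_pow_snd, ZMod.natCast_zmod_val]; ring⟩

lemma exists_next_pow_vertexTop [NeZero L] (o : V × ZMod L) :
    ∃ t : ℕ, W.VertexTop O ((W.next step ^ t) o) := by
  obtain ⟨j, hj⟩ := Finite.exists_max W.rank
  obtain ⟨t, ht⟩ := W.exists_next_pow_snd (step := step) o j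
  exact ⟨t, fun o' _ _ => ht ▸ hj _⟩

/-- If no edge is traversed only once, every boundary circle has an edge which is highest although
the preceding vertex is not highest. -/
lemma exists_edgeTop_not_vertexTop [NeZero L] (hO : ∀ o, W.next step o ∈ O ↔ o ∈ O)
    (hfree : ∀ o ∈ O, ∃ o' ∈ O, o' ≠ o ∧ W.edge step o' = W.edge step o) {o} (ho : o ∈ O) :
    ∃ t : ℕ, W.EdgeTop step O ((W.next step ^ t) o) ∧ ¬ W.VertexTop O ((W.next step ^ t) o) := by
  classical
  obtain ⟨t, ht⟩ := W.dual.exists_next_pow_vertexTop (step := step) (O := O) o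
  have hmem := next_pow_mem hO ho t
  set p := (W.next step ^ t) o with hp
  have hbot : W.dual.EdgeTop step O p := VertexTop.edgeTop (W := W.dual) hO ht
  have hnt : ¬ W.EdgeTop step O p := by
    intro htop
    obtain ⟨q, hq, hne, he⟩ := hfree p hmem
    exact hne (W.eq_of_edge_eq step he (le_antisymm (htop q hq he) (hbot q hq he)))
  have hex : ∃ k : ℕ, W.VertexTop O ((W.next step ^ k) p) := exists_next_pow_vertexTop p
  have hk := Nat.find_spec hex
  have hmin : ∀ {l}, l < Nat.find hex → ¬ W.VertexTop O ((W.next step ^ l) p) :=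
    fun h => Nat.find_min hex h
  obtain hk0 | ⟨l, hl⟩ : Nat.find hex = 0 ∨ ∃ l, Nat.find hex = l + 1 :=
    (Nat.eq_zero_or_eq_succ_pred _).imp id fun h => ⟨_, h⟩
  · rw [hk0] at hk
    exact absurd (VertexTop.edgeTop hO (by simpa using hk)) hnt
  · refine ⟨l + t, ?_, ?_⟩
    · rw [pow_add, Equiv.Perm.mul_apply]
      rw [hl, pow_succ', Equiv.Perm.mul_apply] at hk
      exact VertexTop.edgeTop_of_next hO hk
    · rw [pow_add, Equiv.Perm.mul_apply]
      exact hmin (by rw [hl]; exact Nat.lt_succ_self l)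

variable (W step)

/-- The cellular boundary of a combination of passages, with values in edge chains. -/
noncomputable def boundary : ((V × ZMod L) →₀ ℚ) →ₗ[ℚ] ((V × α) →₀ ℚ) :=
  Finsupp.linearCombination ℚ
    (fun o => Finsupp.single (W.edge step o) (bif (W.letter o.2).2 then (1 : ℚ) else -1))

end StackedWord

/-- The boundary of edge chains in a labelled graph. -/
noncomputable def edgeBoundary (R : Type*) [CommRing R] {α V : Type*} (step : α → V → V) :
    ((V × α) →₀ R) →ₗ[R] (V →₀ R) :=
  Finsupp.linearCombination R
    (fun e => Finsupp.single (step e.2 e.1) (1 : R) - Finsupp.single e.1 1)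

namespace StackedWord

variable {α Λ V : Type*} [LinearOrder Λ] {L : ℕ} (W : StackedWord α L Λ)
  (step : α → Equiv.Perm V)

lemma boundary_apply_of_unique {O : Finset (V × ZMod L)} {o : V × ZMod L}
    (huniq : ∀ o' ∈ O, W.edge step o' = W.edge step o → o' = o) {β : (V × ZMod L) →₀ ℚ}
    (hβ : β.support ⊆ O) :
    W.boundary step β (W.edge step o) = β o * (bif (W.letter o.2).2 then (1 : ℚ) else -1) := by
  classical
  rw [boundary, Finsupp.linearCombination_apply, Finsupp.sum_apply, Finsupp.sum,
    Finset.sum_eq_single o]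
  · simp
  · intro p hp hpo
    have : W.edge step p ≠ W.edge step o := fun h => hpo (huniq p (hβ hp) h)
    simp [Finsupp.single_eq_of_ne, this.symm]
  · intro h
    simp [Finsupp.notMem_support_iff.1 h]

lemma invariant_pow {β : (V × ZMod L) →₀ ℚ} (hinv : ∀ o, β (W.next step o) = β o) (o)
    (t : ℕ) : β ((W.next step ^ t) o) = β o := by
  induction t with
  | zero => simp
  | succ t ih => rw [pow_succ', Equiv.Perm.mul_apply, hinv, ih]

/-- Combinations of boundary circles of cells supported on `O`. -/
def cellChains (O : Finset (V × ZMod L)) : Submodule ℚ ((V × ZMod L) →₀ ℚ) where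
  carrier := {β | (∀ o, β (W.next step o) = β o) ∧ β.support ⊆ O}
  add_mem' := by
    classical
    rintro a b ⟨ha, ha'⟩ ⟨hb, hb'⟩
    exact ⟨fun o => by simp [ha, hb], Finsupp.support_add.trans (Finset.union_subset ha' hb')⟩
  zero_mem' := by simp
  smul_mem' := by
    rintro c b ⟨hb, hb'⟩
    exact ⟨fun o => by simp [hb], Finsupp.support_smul.trans hb'⟩

/-- Cycles supported on a finite set of edges. -/
noncomputable def cyclesOn (E : Finset (V × α)) : Submodule ℚ ((V × α) →₀ ℚ) :=
  Finsupp.supported ℚ ℚ (E : Set (V × α)) ⊓ LinearMap.ker (edgeBoundary ℚ (fun a => step a))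

lemma card_le_finrank_cyclesOn [DecidableEq V] {E : Finset (V × α)} {S : Finset V}
    (h1 : ∀ e ∈ E, e.1 ∈ S ∧ step e.2 e.1 ∈ S) :
    E.card ≤ S.card + Module.finrank ℚ (cyclesOn step E) := by
  classical
  let A : Submodule ℚ ((V × α) →₀ ℚ) := Finsupp.supported ℚ ℚ (E : Set (V × α))
  let B : Submodule ℚ (V →₀ ℚ) := Finsupp.supported ℚ ℚ (S : Set V)
  have hAB : ∀ x ∈ A, edgeBoundary ℚ (fun a => step a) x ∈ B := by
    intro x hx
    rw [edgeBoundary, Finsupp.linearCombination_apply]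
    refine Submodule.sum_mem _ fun e he => Submodule.smul_mem _ _ (Submodule.sub_mem _ ?_ ?_)
    · exact Finsupp.single_mem_supported _ _ (h1 e (hx he)).2
    · exact Finsupp.single_mem_supported _ _ (h1 e (hx he)).1
  let f : A →ₗ[ℚ] B := (edgeBoundary ℚ (fun a => step a)).restrict hAB
  let eA : A ≃ₗ[ℚ] ((E : Set (V × α)) →₀ ℚ) := Finsupp.supportedEquivFinsupp _
  let eB : B ≃ₗ[ℚ] ((S : Set V) →₀ ℚ) := Finsupp.supportedEquivFinsupp _
  have hA : Module.finrank ℚ A = E.card := by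
    rw [eA.finrank_eq, Module.finrank_finsupp_self]; simp
  have hB : Module.finrank ℚ B = S.card := by
    rw [eB.finrank_eq, Module.finrank_finsupp_self]; simp
  have : Module.Finite ℚ A := Module.Finite.equiv eA.symm
  have : Module.Finite ℚ B := Module.Finite.equiv eB.symm
  have hrn := LinearMap.finrank_range_add_finrank_ker f
  have hr : Module.finrank ℚ (LinearMap.range f) ≤ S.card := hB ▸ Submodule.finrank_le _
  have hk : Module.finrank ℚ (LinearMap.ker f) ≤ Module.finrank ℚ (cyclesOn step E) := by
    have : Module.Finite ℚ (cyclesOn step E) :=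
      Module.Finite.of_injective (Submodule.inclusion (inf_le_left : cyclesOn step E ≤ A))
        (Submodule.inclusion_injective _)
    let g : LinearMap.ker f →ₗ[ℚ] cyclesOn step E :=
      LinearMap.codRestrict _ (A.subtype.comp (LinearMap.ker f).subtype) (fun x => by
        refine ⟨x.1.2, ?_⟩
        exact congrArg Subtype.val (LinearMap.mem_ker.1 x.2))
    refine LinearMap.finrank_le_finrank_of_injective (f := g) ?_
    intro x y hxy
    exact Subtype.ext (Subtype.ext (congrArg (fun u : cyclesOn step E => u.1) hxy))
  omega

/-- The counting heart of the argument: without free faces there are at most as many cells as the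
first Betti number allows. -/
lemma finrank_cellChains_le [NeZero L] [DecidableEq V] [DecidableEq α]
    {O : Finset (V × ZMod L)}
    (hO : ∀ o, W.next step o ∈ O ↔ o ∈ O)
    (hfree : ∀ o ∈ O, ∃ o' ∈ O, o' ≠ o ∧ W.edge step o' = W.edge step o) :
    Module.finrank ℚ (W.cellChains step O) ≤
      Module.finrank ℚ (cyclesOn step (O.image (W.edge step))) := by
  classical
  let T := O.filter (W.EdgeTop step O)
  let U := O.filter (W.VertexTop O)
  have hUT : U ⊆ T := fun o ho => by
    simp only [U, T, Finset.mem_filter] at ho ⊢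
    exact ⟨ho.1, ho.2.edgeTop hO⟩
  have hT : (O.image (W.edge step)).card = T.card := by
    rw [← Finset.card_image_of_injOn (s := T) (f := W.edge step)]
    · congr 1
      ext e
      simp only [Finset.mem_image, T, Finset.mem_filter]
      constructor
      · rintro ⟨o, ho, rfl⟩
        obtain ⟨p, hp, he, ht⟩ := W.exists_edgeTop (step := step) ho
        exact ⟨p, ⟨hp, ht⟩, he⟩
      · rintro ⟨o, ho, rfl⟩
        exact ⟨o, ho.1, rfl⟩
    · intro o ho p hp he
      simp only [T, Finset.coe_filter, Set.mem_ofPred_eq] at ho hp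
      exact ho.2.eq ho.1 hp.2 hp.1 he
  have hU : (O.image Prod.fst).card = U.card := by
    rw [← Finset.card_image_of_injOn (s := U) (f := Prod.fst)]
    · congr 1
      ext e
      simp only [Finset.mem_image, U, Finset.mem_filter]
      constructor
      · rintro ⟨o, ho, rfl⟩
        obtain ⟨p, hp, he, ht⟩ := W.exists_vertexTop ho
        exact ⟨p, ⟨hp, ht⟩, he⟩
      · rintro ⟨o, ho, rfl⟩
        exact ⟨o, ho.1, rfl⟩
    · intro o ho p hp he
      simp only [U, Finset.coe_filter, Set.mem_ofPred_eq] at ho hp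
      exact ho.2.eq ho.1 hp.2 hp.1 he
  have hcyc := card_le_finrank_cyclesOn step (E := O.image (W.edge step)) (S := O.image Prod.fst)
    (by
      intro e he
      obtain ⟨o, ho, rfl⟩ := Finset.mem_image.1 he
      refine ⟨Finset.mem_image.2 ⟨_, source_mem hO ho, rfl⟩,
        Finset.mem_image.2 ⟨_, target_mem hO ho, ?_⟩⟩
      rw [target_fst]; rfl)
  have hcell : Module.finrank ℚ (W.cellChains step O) ≤ (T \ U).card := by
    let f : W.cellChains step O →ₗ[ℚ] ((T \ U : Finset _) → ℚ) :=
      { toFun := fun β o => β.1 o.1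
        map_add' := fun _ _ => rfl
        map_smul' := fun _ _ => rfl }
    have hf : Function.Injective f := by
      rw [← LinearMap.ker_eq_bot, LinearMap.ker_eq_bot']
      rintro ⟨β, hinv, hsupp⟩ hβ
      refine Subtype.ext (Finsupp.ext fun o => ?_)
      by_cases ho : o ∈ O
      · obtain ⟨t, h1, h2⟩ := exists_edgeTop_not_vertexTop hO hfree ho
        have := congrFun hβ ⟨(W.next step ^ t) o, by
          simp [T, U, h1, h2, next_pow_mem hO ho]⟩
        exact (W.invariant_pow step hinv o t).symm.trans this
      · exact Finsupp.notMem_support_iff.1 fun h => ho (hsupp h)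
    simpa using LinearMap.finrank_le_finrank_of_injective hf
  have := Finset.card_sdiff_add_card_eq_card hUT
  omega

/-- If the cells attached along `O` kill all cycles on their edges, then their boundaries are
linearly independent. -/
theorem boundary_injOn [NeZero L] (n : ℕ) : ∀ (O : Finset (V × ZMod L)), O.card = n →
    (∀ o, W.next step o ∈ O ↔ o ∈ O) →
    (∀ z : (V × α) →₀ ℚ, (∀ e, z e ≠ 0 → ∃ o ∈ O, W.edge step o = e) →
      edgeBoundary ℚ (fun a => step a) z = 0 →
      ∃ β ∈ W.cellChains step O, W.boundary step β = z) →
    ∀ β ∈ W.cellChains step O, W.boundary step β = 0 → β = 0 := by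
  classical
  induction n using Nat.strong_induction_on with
  | _ n ih =>
  intro O hn hO hsurj
  by_cases hfree : ∀ o ∈ O, ∃ o' ∈ O, o' ≠ o ∧ W.edge step o' = W.edge step o
  · have hfin := W.finrank_cellChains_le step hO hfree
    let A := W.cellChains step O
    let B := cyclesOn step (O.image (W.edge step))
    have : Module.Finite ℚ A := by
      have : Module.Finite ℚ (Finsupp.supported ℚ ℚ (O : Set (V × ZMod L))) :=
        Module.Finite.equiv (Finsupp.supportedEquivFinsupp (O : Set (V × ZMod L))).symm
      have hA : A ≤ Finsupp.supported ℚ ℚ (O : Set (V × ZMod L)) := fun β hβ => hβ.2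
      exact Module.Finite.of_injective (Submodule.inclusion hA) (Submodule.inclusion_injective _)
    have hpre : ∀ z : B, ∃ β : A, W.boundary step β = z := by
      rintro ⟨z, hz, hz'⟩
      obtain ⟨β, hβ, h⟩ := hsurj z (fun e he => by
        have := hz (Finsupp.mem_support_iff.2 he)
        simpa using this) hz'
      exact ⟨⟨β, hβ⟩, h⟩
    have hle : B ≤ Submodule.map (W.boundary step) A := fun z hz => by
      obtain ⟨β, h⟩ := hpre ⟨z, hz⟩
      exact ⟨β, β.2, h⟩
    have h1 : Module.finrank ℚ B ≤ Module.finrank ℚ (Submodule.map (W.boundary step) A) :=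
      Submodule.finrank_mono hle
    let f := (W.boundary step).domRestrict A
    have hrange : LinearMap.range f = Submodule.map (W.boundary step) A := by
      rw [LinearMap.range_domRestrict]
    have hrn := LinearMap.finrank_range_add_finrank_ker f
    rw [hrange] at hrn
    have hker : Module.finrank ℚ (LinearMap.ker f) = 0 := by
      change Module.finrank ℚ A ≤ Module.finrank ℚ B at hfin
      omega
    have hbot : LinearMap.ker f = ⊥ := Submodule.finrank_eq_zero.1 hker
    intro β hβ h0
    have : (⟨β, hβ⟩ : A) ∈ LinearMap.ker f := h0
    rw [hbot, Submodule.mem_bot] at this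
    exact congrArg Subtype.val this
  · push Not at hfree
    obtain ⟨o, ho, huniq⟩ := hfree
    have huniq' : ∀ o' ∈ O, W.edge step o' = W.edge step o → o' = o := fun o' ho' he => by
      by_contra hne
      exact huniq o' ho' hne he
    have hsgn : (bif (W.letter o.2).2 then (1 : ℚ) else -1) ≠ 0 := by
      cases (W.letter o.2).2 <;> simp
    let O' := O.filter (fun p => ¬ (W.next step).SameCycle o p)
    have hcard : O'.card < n := by
      rw [← hn]
      exact Finset.card_lt_card
        (Finset.filter_ssubset.2 ⟨o, ho, by simp [Equiv.Perm.SameCycle.refl]⟩)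
    have hO' : ∀ p, W.next step p ∈ O' ↔ p ∈ O' := by
      intro p; simp [O', hO, Equiv.Perm.sameCycle_apply_right]
    have hres : ∀ β ∈ W.cellChains step O, β o = 0 → β ∈ W.cellChains step O' := by
      rintro β ⟨hinv, hsupp⟩ h0
      refine ⟨hinv, fun p hp => ?_⟩
      simp only [O', Finset.mem_filter]
      refine ⟨hsupp hp, fun hsc => ?_⟩
      have : ∀ i : ℤ, β ((W.next step ^ i) o) = β o := by
        intro i
        induction i with
        | zero => simp
        | succ i ih => rw [add_comm, zpow_add, Equiv.Perm.mul_apply, zpow_one, hinv, ih]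
        | pred i ih =>
          rw [← ih, ← hinv ((W.next step ^ (-(i : ℤ) - 1)) o), ← Equiv.Perm.mul_apply,
            ← zpow_one_add]
          congr 3; ring
      obtain ⟨i, rfl⟩ := hsc
      exact (Finsupp.mem_support_iff.1 hp) ((this i).trans h0)
    have hmono : W.cellChains step O' ≤ W.cellChains step O :=
      fun β hβ => ⟨hβ.1, hβ.2.trans (Finset.filter_subset _ _)⟩
    have key : ∀ β ∈ W.cellChains step O, W.boundary step β (W.edge step o) = 0 → β o = 0 := by
      intro β hβ h
      rw [W.boundary_apply_of_unique step huniq' hβ.2] at h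
      exact (mul_eq_zero.1 h).resolve_right hsgn
    have := ih _ hcard O' rfl hO' (by
      intro z hz hz'
      obtain ⟨β, hβ, rfl⟩ := hsurj z (fun e he => by
        obtain ⟨p, hp, h⟩ := hz e he
        exact ⟨p, Finset.filter_subset _ _ hp, h⟩) hz'
      refine ⟨β, hres β hβ (key β hβ ?_), rfl⟩
      by_contra hne
      obtain ⟨p, hp, h⟩ := hz _ hne
      have := huniq' p (Finset.filter_subset _ _ hp) h
      subst this
      simp [O', Equiv.Perm.SameCycle.refl] at hp)
    intro β hβ h0
    exact this β (hres β hβ (key β hβ (by simp [h0]))) h0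

end StackedWord

namespace MagnusMatrix

variable {α : Type*}

/-- A partial labelling of the superdiagonal by generators, in which no generator occurs at two
consecutive places. -/
def Pattern (α : Type*) := {c : ℕ → Option α // ∀ i a, c i = some a → c (i + 1) ≠ some a}

open Classical in
/-- The nilpotent matrix with ones at the superdiagonal places labelled `a`. -/
noncomputable def shift (c : Pattern α) (a : α) : IncidenceAlgebra ℤ ℕ :=
  ⟨fun i j => if j = i + 1 ∧ c.1 i = some a then 1 else 0, fun i j h =>
    if_neg fun h' => h (by omega)⟩

open Classical in
lemma shift_apply (c : Pattern α) (a : α) (i j : ℕ) :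
    shift c a i j = if j = i + 1 ∧ c.1 i = some a then 1 else 0 := rfl

open Classical in
lemma shift_mul_apply (c : Pattern α) (a : α) (f : IncidenceAlgebra ℤ ℕ) (i j : ℕ) :
    (shift c a * f) i j = if c.1 i = some a then f (i + 1) j else 0 := by
  rw [IncidenceAlgebra.mul_apply]
  by_cases hj : i + 1 ≤ j
  · rw [Finset.sum_eq_single (i + 1)]
    · simp [shift_apply]
    · intro k _ hk; simp [shift_apply, hk]
    · intro h; exact absurd (Finset.mem_Icc.2 ⟨by omega, hj⟩) h
  · rw [IncidenceAlgebra.apply_eq_zero_of_not_le hj, ite_self]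
    refine Finset.sum_eq_zero fun k hk => ?_
    have : k ≠ i + 1 := by simp at hk; omega
    simp [shift_apply, this]

lemma shift_mul_shift (c : Pattern α) (a : α) : shift c a * shift c a = 0 := by
  classical
  refine IncidenceAlgebra.ext fun i j _ => ?_
  rw [shift_mul_apply]
  split_ifs with h
  · simp [shift_apply, c.2 i a h]
  · rfl

/-- The elementary unipotent attached to a generator. -/
noncomputable def gen (c : Pattern α) (a : α) : (IncidenceAlgebra ℤ ℕ)ˣ where
  val := 1 + shift c a
  inv := 1 - shift c a
  val_inv := by rw [add_mul, mul_sub, mul_sub, shift_mul_shift]; simp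
  inv_val := by rw [sub_mul, mul_add, mul_add, shift_mul_shift]; simp

lemma gen_zpow (c : Pattern α) (a : α) (e : ℤ) :
    ((gen c a ^ e : (IncidenceAlgebra ℤ ℕ)ˣ) : IncidenceAlgebra ℤ ℕ) = 1 + e • shift c a := by
  induction e with
  | zero => simp
  | succ e ih =>
    rw [zpow_add_one, Units.val_mul, ih]
    simp only [gen, add_mul, mul_add, smul_mul_assoc, shift_mul_shift, add_smul]
    simp [add_assoc, add_comm]
  | pred e ih =>
    rw [zpow_sub_one, Units.val_mul, ih]
    simp only [gen, Units.inv_mk, add_mul, mul_sub, smul_mul_assoc, shift_mul_shift, sub_smul]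
    simp only [smul_zero, one_mul, mul_one, one_smul, neg_smul]
    abel

/-- The representation of the free group attached to a pattern. -/
noncomputable def rep (c : Pattern α) : FreeGroup α →* (IncidenceAlgebra ℤ ℕ)ˣ :=
  FreeGroup.lift (gen c)

/-- The entries of the matrix attached to a free group element. -/
noncomputable def coef (c : Pattern α) (w : FreeGroup α) (i j : ℕ) : ℤ :=
  (rep c w : IncidenceAlgebra ℤ ℕ) i j

lemma coef_mul (c : Pattern α) (u w : FreeGroup α) (i j : ℕ) :
    coef c (u * w) i j = ∑ k ∈ Finset.Icc i j, coef c u i k * coef c w k j := by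
  simp [coef, IncidenceAlgebra.mul_apply]

lemma coef_one (c : Pattern α) (i j : ℕ) : coef c 1 i j = if i = j then 1 else 0 := by
  simp [coef]

lemma coef_of_lt (c : Pattern α) (w : FreeGroup α) {i j : ℕ} (h : j < i) : coef c w i j = 0 :=
  IncidenceAlgebra.apply_eq_zero_of_not_le (by omega) _

lemma coef_of_zpow_mul [DecidableEq α] (c : Pattern α) (a : α) (e : ℤ) (w : FreeGroup α)
    (i j : ℕ) : coef c (FreeGroup.of a ^ e * w) i j =
      coef c w i j + if c.1 i = some a then e * coef c w (i + 1) j else 0 := by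
  classical
  rw [coef, map_mul, map_zpow, rep, FreeGroup.lift_apply_of, Units.val_mul, gen_zpow, add_mul,
    one_mul, IncidenceAlgebra.add_apply, smul_mul_assoc, IncidenceAlgebra.constSMul_apply,
    shift_mul_apply]
  simp only [coef, rep, smul_eq_mul, mul_ite, mul_zero]

lemma coef_self (c : Pattern α) (w : FreeGroup α) (i : ℕ) : coef c w i i = 1 := by
  classical
  have key : ∀ (a : α) (e : ℤ) (w : FreeGroup α), coef c w i i = 1 →
      coef c (FreeGroup.of a ^ e * w) i i = 1 := by
    intro a e w h
    rw [coef_of_zpow_mul, h, coef_of_lt c w (Nat.lt_succ_self i)]; simp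
  induction w using FreeGroup.induction_on with
  | C1 => simp [coef_one]
  | of a => simpa [coef_one] using key a 1 1
  | inv_of a _ => simpa [coef_one] using key a (-1) 1
  | mul u w hu hw => rw [coef_mul]; simp [hu, hw]

/-- The product of a list of syllables. -/
def syllableProd (S : List (α × ℤ)) : FreeGroup α :=
  (S.map fun s => FreeGroup.of s.1 ^ s.2).prod

lemma exists_syllables (w : FreeGroup α) : ∃ S : List (α × ℤ), (∀ s ∈ S, s.2 ≠ 0) ∧
    S.IsChain (fun s t => s.1 ≠ t.1) ∧ syllableProd S = w := by
  classical
  have key : ∀ (a : α) (e : ℤ) (w : FreeGroup α), (∃ S : List (α × ℤ), (∀ s ∈ S, s.2 ≠ 0) ∧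
      S.IsChain (fun s t => s.1 ≠ t.1) ∧ syllableProd S = w) →
      ∃ S : List (α × ℤ), (∀ s ∈ S, s.2 ≠ 0) ∧ S.IsChain (fun s t => s.1 ≠ t.1) ∧
        syllableProd S = FreeGroup.of a ^ e * w := by
    rintro a e w ⟨S, h1, h2, rfl⟩
    by_cases he : e = 0
    · exact ⟨S, h1, h2, by simp [he]⟩
    match S, h1, h2 with
    | [], _, _ => exact ⟨[(a, e)], by simp [he], by simp, by simp [syllableProd]⟩
    | (b, f) :: S, h1, h2 =>
      by_cases hab : a = b
      · subst hab
        by_cases hef : e + f = 0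
        · refine ⟨S, fun s hs => h1 s (List.mem_cons_of_mem _ hs), h2.tail, ?_⟩
          simp [syllableProd, ← mul_assoc, ← zpow_add, hef]
        · refine ⟨(a, e + f) :: S, ?_, ?_, ?_⟩
          · intro s hs
            rcases List.mem_cons.1 hs with rfl | hs
            · exact hef
            · exact h1 s (List.mem_cons_of_mem _ hs)
          · rw [List.isChain_cons] at h2 ⊢
            exact h2
          · simp [syllableProd, ← mul_assoc, ← zpow_add]
      · refine ⟨(a, e) :: (b, f) :: S, ?_, ?_, by simp [syllableProd]⟩
        · intro s hs
          rcases List.mem_cons.1 hs with rfl | hs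
          · exact he
          · exact h1 s hs
        · exact List.isChain_cons_cons.2 ⟨hab, h2⟩
  have key' : ∀ u w : FreeGroup α, (∃ S : List (α × ℤ), (∀ s ∈ S, s.2 ≠ 0) ∧
      S.IsChain (fun s t => s.1 ≠ t.1) ∧ syllableProd S = w) →
      ∃ S : List (α × ℤ), (∀ s ∈ S, s.2 ≠ 0) ∧ S.IsChain (fun s t => s.1 ≠ t.1) ∧
        syllableProd S = u * w := by
    intro u
    induction u using FreeGroup.induction_on with
    | C1 => simp
    | of a => intro w h; simpa using key a 1 w h
    | inv_of a _ => intro w h; simpa using key a (-1) w h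
    | mul u v hu hv => intro w h; rw [mul_assoc]; exact hu _ (hv _ h)
  simpa using key' w 1 ⟨[], by simp, by simp, by simp [syllableProd]⟩

lemma coef_syllableProd (c : Pattern α) (S : List (α × ℤ)) : ∀ i : ℕ,
    (∀ t (h : t < S.length), c.1 (i + t) = some (S[t]).1) →
    coef c (syllableProd S) i (i + S.length) = (S.map Prod.snd).prod := by
  classical
  have hzero : ∀ (S : List (α × ℤ)) (i j : ℕ), i + S.length < j →
      coef c (syllableProd S) i j = 0 := by
    intro S
    induction S with
    | nil => intro i j h; simp at h; simp [syllableProd, coef_one]; omega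
    | cons s S ih =>
      intro i j h
      simp only [List.length_cons] at h
      have : syllableProd (s :: S) = FreeGroup.of s.1 ^ s.2 * syllableProd S := by
        simp [syllableProd]
      rw [this, coef_of_zpow_mul, ih i j (by omega), ih (i + 1) j (by omega)]
      simp
  induction S with
  | nil => intro i _; simp [syllableProd, coef_one]
  | cons s S ih =>
    intro i h
    have : syllableProd (s :: S) = FreeGroup.of s.1 ^ s.2 * syllableProd S := by
      simp [syllableProd]
    have h0 : c.1 i = some s.1 := h 0 (by simp)
    rw [this, coef_of_zpow_mul, hzero S i _ (by simp), if_pos h0, List.length_cons]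
    have := ih (i + 1) (fun t ht => by
      have := h (t + 1) (by simpa using ht)
      rw [add_assoc, add_comm 1 t]; simpa using this)
    rw [show i + (S.length + 1) = i + 1 + S.length by ring, this]
    simp

/-- Nontrivial elements of a free group are detected by some matrix entry. -/
lemma exists_coef_ne_zero {w : FreeGroup α} (hw : w ≠ 1) :
    ∃ (d : ℕ) (c : Pattern α) (i : ℕ), 0 < d ∧ coef c w i (i + d) ≠ 0 := by
  obtain ⟨S, h1, h2, rfl⟩ := exists_syllables w
  let c : Pattern α := ⟨fun t => S[t]?.map Prod.fst, by
    intro i a hi hi'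
    simp only [Option.map_eq_some_iff, List.getElem?_eq_some_iff] at hi hi'
    obtain ⟨x, ⟨hx, rfl⟩, hxa⟩ := hi
    obtain ⟨y, ⟨hy, rfl⟩, hya⟩ := hi'
    exact List.isChain_iff_getElem.1 h2 i hy (hxa.trans hya.symm)⟩
  refine ⟨S.length, c, 0, ?_, ?_⟩
  · rw [List.length_pos_iff]
    rintro rfl
    exact hw rfl
  · rw [coef_syllableProd]
    · intro h0
      obtain ⟨s, hs, h⟩ := List.mem_map.1 (List.prod_eq_zero_iff.1 h0)
      exact h1 s hs h
    · intro t ht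
      simp [c, ht]

/-- Left and right multiplication do not change differences at the lowest level. -/
lemma coef_conj_sub {u a b : FreeGroup α} {c : Pattern α} {d : ℕ}
    (h : ∀ d' < d, ∀ i, coef c a i (i + d') = coef c b i (i + d')) (i : ℕ) :
    coef c (u * a * u⁻¹) i (i + d) - coef c (u * b * u⁻¹) i (i + d) =
      coef c a i (i + d) - coef c b i (i + d) := by
  have hlow : ∀ {p q : ℕ}, q < p + d → coef c a p q = coef c b p q := by
    intro p q hpq
    by_cases hle : p ≤ q
    · obtain ⟨k, rfl⟩ := Nat.exists_eq_add_of_le hle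
      exact h k (by omega) p
    · rw [coef_of_lt c a (by omega), coef_of_lt c b (by omega)]
  have hleft : ∀ p q, q ≤ p + d → coef c (u * a) p q - coef c (u * b) p q =
      coef c a p q - coef c b p q := by
    intro p q hpq
    by_cases hle : p ≤ q
    · rw [coef_mul, coef_mul, ← Finset.sum_sub_distrib,
        Finset.sum_eq_single_of_mem p (by simp [hle])]
      · simp [coef_self]
      · intro k hk hkp
        rw [Finset.mem_Icc] at hk
        rw [hlow (p := k) (q := q) (by omega), sub_self]
    · simp [coef_of_lt c _ (not_le.1 hle)]
  rw [coef_mul c (u * a), coef_mul c (u * b), ← Finset.sum_sub_distrib,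
    Finset.sum_eq_single_of_mem (i + d) (by simp)]
  · rw [coef_self, mul_one, mul_one, hleft _ _ le_rfl]
  · intro k hk hkp
    rw [Finset.mem_Icc] at hk
    have := hleft i k (by omega)
    rw [hlow (by omega), sub_self] at this
    rw [← sub_mul, this, zero_mul]

end MagnusMatrix

open MagnusMatrix in
/-- Free groups carry a linear order which is invariant under conjugation. -/
theorem FreeGroup.exists_conj_invariant_order (α : Type*) :
    ∃ _ : LinearOrder (FreeGroup α), ∀ u a b : FreeGroup α,
      u * a * u⁻¹ ≤ u * b * u⁻¹ ↔ a ≤ b := by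
  classical
  let κ := Pattern α × ℕ
  let _ : LinearOrder κ := linearOrderOfSTO WellOrderingRel
  have : WellFoundedLT κ := ⟨(inferInstance : IsWellOrder κ WellOrderingRel).wf⟩
  let lev : FreeGroup α → ℕ → κ → ℤ := fun w d k => coef k.1 w k.2 (k.2 + d)
  let X : FreeGroup α → Lex (ℕ → Lex (κ → ℤ)) := fun w => toLex fun d => toLex (lev w d)
  have hX : Function.Injective X := by
    intro a b hab
    by_contra hne
    have hne' : b⁻¹ * a ≠ 1 := by rwa [Ne, inv_mul_eq_one, eq_comm]
    obtain ⟨d, c, i, hd, hc⟩ := exists_coef_ne_zero hne'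
    have heq : ∀ p q, coef c a p q = coef c b p q := by
      intro p q
      by_cases hle : p ≤ q
      · obtain ⟨k, rfl⟩ := Nat.exists_eq_add_of_le hle
        exact congrFun (congrFun hab k) (c, p)
      · rw [coef_of_lt c a (by omega), coef_of_lt c b (by omega)]
    refine hc ?_
    rw [coef_mul]
    simp only [heq]
    rw [← coef_mul, inv_mul_cancel, coef_one, if_neg (by omega)]
  let inst : LinearOrder (FreeGroup α) := LinearOrder.lift' X hX
  have hlt : ∀ u a b : FreeGroup α, a < b → u * a * u⁻¹ < u * b * u⁻¹ := by
    intro u a b hab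
    obtain ⟨d, hd, k, hk, hlt⟩ : ∃ d, (∀ d' < d, lev a d' = lev b d') ∧
      ∃ k, (∀ l < k, lev a d l = lev b d l) ∧ lev a d k < lev b d k := hab
    have hconj : ∀ d' ≤ d, ∀ l, lev (u * a * u⁻¹) d' l - lev (u * b * u⁻¹) d' l =
        lev a d' l - lev b d' l := by
      intro d' hd' l
      exact coef_conj_sub (fun e he i => congrFun (hd e (by omega)) (l.1, i)) l.2
    change ∃ d, (∀ d' < d, lev (u * a * u⁻¹) d' = lev (u * b * u⁻¹) d') ∧
      ∃ k, (∀ l < k, lev (u * a * u⁻¹) d l = lev (u * b * u⁻¹) d l) ∧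
        lev (u * a * u⁻¹) d k < lev (u * b * u⁻¹) d k
    refine ⟨d, fun d' hd' => funext fun l => ?_, k, fun l hl => ?_, ?_⟩
    · have := hconj d' hd'.le l
      rw [hd d' hd', sub_self] at this
      exact sub_eq_zero.1 this
    · have := hconj d le_rfl l
      rw [hk l hl, sub_self] at this
      exact sub_eq_zero.1 this
    · have := hconj d le_rfl k
      linarith
  refine ⟨inst, fun u a b => ⟨fun h => ?_, fun h => ?_⟩⟩
  · by_contra hba
    exact absurd (hlt u b a (not_le.1 hba)) (not_lt.2 h)
  · rcases h.eq_or_lt with rfl | h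
    · exact le_rfl
    · exact (hlt u a b h).le

open MagnusMatrix in
/-- Free groups are potent: a nontrivial element has any prescribed order in some finite
quotient. -/
theorem FreeGroup.exists_finite_orderOf_eq {α : Type*} {w : FreeGroup α} (hw : w ≠ 1) {m : ℕ}
    (hm : m ≠ 0) : ∃ (H : Type) (_ : Group H) (_ : Finite H) (φ : FreeGroup α →* H),
      orderOf (φ w) = m := by
  classical
  have hex : ∃ d, ∃ (c : Pattern α) (i : ℕ), 0 < d ∧ coef c w i (i + d) ≠ 0 :=
    exists_coef_ne_zero hw
  obtain ⟨c, i, hd, hne⟩ := Nat.find_spec hex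
  have hmin : ∀ d', d' < Nat.find hex → 0 < d' → ∀ j, coef c w j (j + d') = 0 := by
    intro d' hd' h0 j
    by_contra h
    exact Nat.find_min hex hd' ⟨c, j, h0, h⟩
  set d := Nat.find hex
  set a := coef c w i (i + d) with ha
  let q : ℕ := m * a.natAbs
  have : NeZero q := ⟨mul_ne_zero hm (Int.natAbs_ne_zero.2 hne)⟩
  let win : IncidenceAlgebra ℤ ℕ →* Matrix (Fin (d + 1)) (Fin (d + 1)) (ZMod q) :=
    { toFun := fun f => Matrix.of fun s t => (f (i + s) (i + t) : ZMod q)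
      map_one' := by
        ext s t
        simp only [Matrix.of_apply, IncidenceAlgebra.one_apply, Matrix.one_apply, add_right_inj,
          Fin.val_inj]
        split_ifs <;> simp
      map_mul' := by
        intro f g
        ext s t
        simp only [Matrix.of_apply, Matrix.mul_apply, IncidenceAlgebra.mul_apply]
        push_cast
        symm
        rw [← Finset.sum_subset (Finset.subset_univ (Finset.univ.filter
          (fun k : Fin (d + 1) => s ≤ k ∧ k ≤ t)))]
        · refine Finset.sum_nbij (fun k => i + (k : ℕ)) ?_ ?_ ?_ ?_
          · intro k hk
            simp only [Finset.mem_filter, Finset.mem_univ, true_and, Fin.le_def] at hk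
            simp only [Finset.mem_Icc]; omega
          · intro k _ l _ hkl
            simp only at hkl
            exact Fin.ext (by omega)
          · intro k hk
            simp only [Finset.coe_Icc, Set.mem_Icc] at hk
            have ht := t.2
            refine ⟨⟨k - i, by omega⟩, ?_, ?_⟩
            · simp only [Finset.coe_filter, Finset.mem_univ, true_and, Fin.le_def,
                Set.mem_ofPred_eq]
              omega
            · simp only; omega
          · intro k _; rfl
        · intro k _ hk
          simp only [Finset.mem_filter, Finset.mem_univ, true_and, Fin.le_def, not_and_or] at hk
          rcases hk with hk | hk
          · rw [IncidenceAlgebra.apply_eq_zero_of_not_le (by omega)]; simp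
          · rw [IncidenceAlgebra.apply_eq_zero_of_not_le (a := i + (k : ℕ)) (by omega)]; simp }
  let φ := (Units.map win).comp (rep c)
  refine ⟨(Matrix (Fin (d + 1)) (Fin (d + 1)) (ZMod q))ˣ, inferInstance, inferInstance, φ, ?_⟩
  have hval : ((φ w : (Matrix (Fin (d + 1)) (Fin (d + 1)) (ZMod q))ˣ) :
      Matrix (Fin (d + 1)) (Fin (d + 1)) (ZMod q)) =
      1 + Matrix.single 0 (Fin.last d) (a : ZMod q) := by
    ext s t
    change ((coef c w (i + s) (i + t) : ℤ) : ZMod q) = _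
    have hs := s.2
    have ht := t.2
    rcases lt_trichotomy s t with hst | rfl | hst
    · have hne' : s ≠ t := hst.ne
      rw [Fin.lt_def] at hst
      rw [Matrix.add_apply, Matrix.one_apply_ne hne', zero_add]
      by_cases hcorner : s = 0 ∧ t = Fin.last d
      · obtain ⟨rfl, rfl⟩ := hcorner
        simp [ha]
      · rw [Matrix.single_apply_of_ne (h := fun h => hcorner ⟨h.1.symm, h.2.symm⟩)]
        have hlt : (t : ℕ) - s < d := by
          by_contra hge
          refine hcorner ⟨Fin.ext ?_, Fin.ext ?_⟩
          · rw [Fin.val_zero]; omega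
          · rw [Fin.val_last]; omega
        have := hmin _ hlt (by omega) (i + s)
        rw [show i + (s : ℕ) + (t - s) = i + t by omega] at this
        simp [this]
    · rw [coef_self]
      have : ¬ (0 = s ∧ Fin.last d = s) := by
        rintro ⟨rfl, h⟩
        have := congrArg Fin.val h
        simp at this; omega
      simp [Matrix.single_apply_of_ne (h := this)]
    · have hne' : s ≠ t := hst.ne'
      rw [Fin.lt_def] at hst
      rw [coef_of_lt _ _ (by omega), Matrix.add_apply, Matrix.one_apply_ne hne',
        Matrix.single_apply_of_ne (h := by rintro ⟨rfl, rfl⟩; simp at hst)]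
      simp
  have hpow : ∀ k : ℕ, ((φ w ^ k : (Matrix (Fin (d + 1)) (Fin (d + 1)) (ZMod q))ˣ) :
      Matrix (Fin (d + 1)) (Fin (d + 1)) (ZMod q)) =
      1 + Matrix.single 0 (Fin.last d) ((k * a : ℤ) : ZMod q) := by
    have h0 : Fin.last d ≠ 0 := by
      intro h
      have := congrArg Fin.val h
      simp at this; omega
    intro k
    induction k with
    | zero => simp
    | succ k ih =>
      rw [pow_succ, Units.val_mul, ih, hval, add_mul, mul_add, mul_add,
        Matrix.single_mul_single_of_ne _ _ _ _ h0]
      simp only [one_mul, mul_one, add_zero]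
      rw [add_assoc, ← Matrix.single_add]
      congr 2
      push_cast; ring
  have hiff : ∀ k : ℕ, φ w ^ k = 1 ↔ m ∣ k := by
    intro k
    rw [Units.ext_iff, hpow, Units.val_one, add_eq_left]
    have key : ∀ x : ZMod q, Matrix.single (0 : Fin (d + 1)) (Fin.last d) x = 0 ↔ x = 0 := by
      intro x
      constructor
      · intro h
        have := congrFun (congrFun h 0) (Fin.last d)
        simpa using this
      · intro h; rw [h]; simp
    refine (key _).trans ?_
    rw [ZMod.intCast_zmod_eq_zero_iff_dvd, ← Int.natAbs_dvd_natAbs, Int.natAbs_mul]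
    simp only [Int.natAbs_natCast, q]
    exact Nat.mul_dvd_mul_iff_right (Int.natAbs_pos.2 hne)
  exact Nat.dvd_antisymm (orderOf_dvd_of_pow_eq_one ((hiff m).2 dvd_rfl))
    ((hiff _).1 (pow_orderOf_eq_one _))

namespace StackedWord

variable {α : Type*} {L : ℕ}

/-- The element of the free group spelled by `t` letters of a cyclic word, starting at `j`. -/
def subword (y : ZMod L → α × Bool) (j : ZMod L) (t : ℕ) : FreeGroup α :=
  FreeGroup.mk ((List.range t).map fun s : ℕ => y (j + s))

lemma subword_zero (y : ZMod L → α × Bool) (j : ZMod L) : subword y j 0 = 1 := rfl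

lemma subword_succ (y : ZMod L → α × Bool) (j : ZMod L) (t : ℕ) :
    subword y j (t + 1) = subword y j t * FreeGroup.mk [y (j + t)] := by
  simp [subword, List.range_succ]

lemma subword_succ' (y : ZMod L → α × Bool) (j : ZMod L) (t : ℕ) :
    subword y j (t + 1) = FreeGroup.mk [y j] * subword y (j + 1) t := by
  simp only [subword, List.range_succ_eq_map, List.map_cons, List.map_map, FreeGroup.mul_mk,
    Nat.cast_zero, add_zero, List.singleton_append]
  congr 2
  refine List.map_congr_left fun s _ => ?_
  simp [add_left_comm, add_comm]

lemma subword_conj (y : ZMod L → α × Bool) (j : ZMod L) :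
    subword y (j + 1) L = (FreeGroup.mk [y j])⁻¹ * subword y j L * FreeGroup.mk [y j] := by
  rw [mul_assoc, eq_inv_mul_iff_mul_eq, ← subword_succ', subword_succ]
  simp

lemma subword_injective [DecidableEq α] {y : ZMod L → α × Bool}
    (hy : ∀ i, (y i).1 = (y (i + 1)).1 → (y i).2 = (y (i + 1)).2) {j k : ZMod L} {t : ℕ}
    (h : subword y j t = subword y k t) {s : ℕ} (hs : s < t) : y (j + s) = y (k + s) := by
  have hred : ∀ j, FreeGroup.IsReduced ((List.range t).map fun s : ℕ => y (j + s)) := by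
    intro j
    refine List.isChain_iff_getElem.2 fun i hi => ?_
    have := hy (j + i)
    simpa [add_assoc] using this
  have := congrArg FreeGroup.toWord h
  rw [subword, subword, FreeGroup.toWord_mk, FreeGroup.toWord_mk, (hred j).reduce_eq,
    (hred k).reduce_eq] at this
  have := List.map_inj_left.1 this s (by simpa using hs)
  exact this

lemma subword_add (y : ZMod L → α × Bool) (j : ZMod L) (s t : ℕ) :
    subword y j (s + t) = subword y j s * subword y (j + s) t := by
  induction t with
  | zero => simp [subword_zero]
  | succ t ih => rw [← add_assoc, subword_succ, ih, subword_succ, mul_assoc]; simp [add_assoc]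

lemma exists_pow_of_periodic [NeZero L] {y : ZMod L → α × Bool} {e : ZMod L} (he : e ≠ 0)
    (hper : ∀ i, y (i + e) = y i) :
    ∃ (s : FreeGroup α) (k : ℕ), 2 ≤ k ∧ subword y 0 L = s ^ k := by
  have hmul : ∀ (n : ℕ) i, y (i + n * e) = y i := by
    intro n
    induction n with
    | zero => simp
    | succ n ih =>
      intro i
      rw [Nat.cast_add, Nat.cast_one, add_mul, one_mul, ← add_assoc, hper, ih]
  have hz : ∀ (n : ℤ) i, y (i + n * e) = y i := by
    intro n i
    obtain ⟨n, rfl | rfl⟩ := n.eq_nat_or_neg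
    · simpa using hmul n i
    · have := hmul n (i + ((-n : ℤ) : ZMod L) * e)
      rw [← this]; congr 1; push_cast; ring
  set g := Nat.gcd e.val L with hg
  have hgy : ∀ i, y (i + g) = y i := by
    intro i
    have hb := congrArg (Int.cast : ℤ → ZMod L) (Nat.gcd_eq_gcd_ab e.val L)
    push_cast at hb
    rw [ZMod.natCast_zmod_val, ZMod.natCast_self, zero_mul, add_zero, mul_comm] at hb
    rw [hg, hb, hz]
  have hgL : g ∣ L := Nat.gcd_dvd_right _ _
  have hL : L ≠ 0 := NeZero.ne L
  have he0 : 0 < e.val := Nat.pos_of_ne_zero fun h => he ((ZMod.val_eq_zero e).1 h)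
  have hglt : g < L := (Nat.le_of_dvd he0 (Nat.gcd_dvd_left _ _)).trans_lt (ZMod.val_lt e)
  obtain ⟨k, hk⟩ := hgL
  have hpow : ∀ k : ℕ, subword y 0 (g * k) = subword y 0 g ^ k := by
    intro k
    induction k with
    | zero => simp [subword_zero]
    | succ k ih =>
      rw [mul_add, mul_one, subword_add, ih, pow_succ]
      congr 1
      simp only [subword]
      congr 1
      refine List.map_congr_left fun s _ => ?_
      have hkg : ∀ k : ℕ, ∀ i, y (i + (g * k : ℕ)) = y i := by
        intro k
        induction k with
        | zero => simp
        | succ k ih =>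
          intro i
          rw [mul_add, mul_one, Nat.cast_add, ← add_assoc, hgy, ih]
      rw [add_assoc, add_comm _ (s : ZMod L), ← add_assoc]
      exact hkg k _
  refine ⟨subword y 0 g, k, ?_, ?_⟩
  · by_contra hk2
    have : k ≤ 1 := by omega
    interval_cases k <;> omega
  · rw [← hpow]
    exact congrArg _ hk

/-- A free group element which is not a proper power is conjugate to one spelled by a stacked
cyclic word. -/
theorem exists_conj_subword (r : FreeGroup α)
    (hr : ¬ ∃ (s : FreeGroup α) (k : ℕ), 2 ≤ k ∧ r = s ^ k) :
    ∃ (L : ℕ) (_ : NeZero L) (_ : LinearOrder (FreeGroup α))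
      (W : StackedWord α L (FreeGroup α)) (g : FreeGroup α),
      r = g * subword W.letter 0 L * g⁻¹ := by
  classical
  set w := FreeGroup.reduceCyclically r.toWord with hw
  set g := FreeGroup.reduceCyclically.conjugator r.toWord with hg
  have hcyc : FreeGroup.IsCyclicallyReduced w :=
    FreeGroup.reduceCyclically.isCyclicallyReduced FreeGroup.isReduced_toWord
  have hconj : r = FreeGroup.mk g * FreeGroup.mk w * (FreeGroup.mk g)⁻¹ := by
    rw [FreeGroup.inv_mk, FreeGroup.mul_mk, FreeGroup.mul_mk,
      FreeGroup.reduceCyclically.conj_conjugator_reduceCyclically, FreeGroup.mk_toWord]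
  have hw0 : w ≠ [] := by
    intro h
    refine hr ⟨1, 2, le_rfl, ?_⟩
    rw [hconj, h, ← FreeGroup.one_eq_mk, mul_one, mul_inv_cancel, one_pow]
  have : NeZero w.length := ⟨by simpa using hw0⟩
  let y : ZMod w.length → α × Bool := fun i => w[i.val]'(ZMod.val_lt i)
  have hyval : ∀ (s : ℕ) (hs : s < w.length), y s = w[s] := by
    intro s hs
    simp only [y, ZMod.val_cast_of_lt hs]
  have hy0 : subword y 0 w.length = FreeGroup.mk w := by
    rw [subword]
    congr 1
    refine List.ext_getElem (by simp) fun s h1 h2 => ?_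
    simp [hyval s h2]
  have hy : ∀ i, (y i).1 = (y (i + 1)).1 → (y i).2 = (y (i + 1)).2 := by
    intro i
    obtain ⟨s, hs, rfl⟩ : ∃ s : ℕ, s < w.length ∧ (s : ZMod w.length) = i :=
      ⟨i.val, ZMod.val_lt i, ZMod.natCast_zmod_val i⟩
    by_cases hs' : s + 1 < w.length
    · rw [← Nat.cast_add_one, hyval s hs, hyval _ hs']
      exact List.isChain_iff_getElem.1 hcyc.1 s hs'
    · have hlast : s + 1 = w.length := by omega
      have : (s : ZMod w.length) + 1 = (0 : ℕ) := by
        rw [← Nat.cast_add_one, hlast]; simp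
      rw [this, hyval s hs, hyval 0 (by omega)]
      refine hcyc.2 _ ?_ _ ?_
      · rw [List.getLast?_eq_getElem?, ← hlast]; simp
      · rw [List.head?_eq_getElem?]; simp
  obtain ⟨inst, hinv⟩ := FreeGroup.exists_conj_invariant_order α
  have hrank : ∀ j, subword y (bif (y j).2 then j + 1 else j) w.length =
      (FreeGroup.of (y j).1)⁻¹ * subword y (bif (y j).2 then j else j + 1) w.length *
        (FreeGroup.of (y j).1)⁻¹⁻¹ := by
    intro j
    have h := subword_conj y j
    have hof : FreeGroup.mk [y j] = bif (y j).2 then FreeGroup.of (y j).1 else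
        (FreeGroup.of (y j).1)⁻¹ := by
      rcases hyj : y j with ⟨a, b⟩
      cases b <;> rfl
    rw [hof] at h
    cases hb : (y j).2
    · rw [hb] at h
      simp only [cond_false] at h ⊢
      rw [h]; group
    · rw [hb] at h
      simpa using h
  let W : StackedWord α w.length (FreeGroup α) :=
    { letter := y
      rank := fun j => subword y j w.length
      rank_injective := by
        intro j k hjk
        by_contra hne
        obtain ⟨s, n, hn, h⟩ := exists_pow_of_periodic (y := y) (e := k - j)
          (sub_ne_zero.2 (Ne.symm hne)) (fun i => by
            have := subword_injective hy hjk (ZMod.val_lt (i - j))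
            rw [ZMod.natCast_zmod_val] at this
            rw [show i + (k - j) = k + (i - j) by ring, ← this]
            congr 1; ring)
        refine hr ⟨FreeGroup.mk g * s * (FreeGroup.mk g)⁻¹, n, hn, ?_⟩
        rw [conj_pow, ← h, hy0, hconj]
      not_cancel := by
        intro j k h1 h2
        cases hj : (y j).2 <;> cases hk : (y k).2 <;> rw [hj, hk] at h2 <;>
          simp only [cond_false, cond_true] at h2
        · exact add_right_cancel h2
        · subst h2
          rw [hy j h1, hk] at hj
          exact absurd hj (by simp)
        · subst h2
          rw [hy k h1.symm, hj] at hk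
          exact absurd hk (by simp)
        · exact h2
      noncrossing := by
        intro j k h
        rw [hrank j, hrank k, ← h]
        exact (hinv _ _ _).symm }
  exact ⟨w.length, inferInstance, inst, W, FreeGroup.mk g, by rw [hconj, ← hy0]⟩

end StackedWord

namespace FreeGroup

variable {α V V' : Type*} (step : α → Equiv.Perm V)

/-- The endpoint of the walk labelled by a word in a labelled graph in which each generator
permutes the vertices. -/
def walk (w : FreeGroup α) : Equiv.Perm V :=
  (FreeGroup.lift (fun a => MulOpposite.op (step a)) w).unop

@[simp] lemma walk_one : walk step 1 = 1 := by simp [walk]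

lemma walk_mul (u w : FreeGroup α) : walk step (u * w) = walk step w * walk step u := by
  simp [walk]

lemma walk_mul_apply (u w : FreeGroup α) (v : V) :
    walk step (u * w) v = walk step w (walk step u v) := by
  rw [walk_mul]; rfl

@[simp] lemma walk_inv (w : FreeGroup α) : walk step w⁻¹ = (walk step w)⁻¹ := by simp [walk]

@[simp] lemma walk_of (a : α) : walk step (of a) = step a := by simp [walk]

lemma walk_map {step' : α → Equiv.Perm V'} (f : V → V')
    (hf : ∀ a v, f (step a v) = step' a (f v)) (w : FreeGroup α) (v : V) :
    f (walk step w v) = walk step' w (f v) := by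
  induction w using FreeGroup.induction_on generalizing v with
  | C1 => simp
  | of a => simp [hf]
  | inv_of a _ =>
    rw [walk_inv, walk_inv, walk_of, walk_of, Equiv.Perm.eq_inv_iff_eq, ← hf]
    simp
  | mul u w hu hw => rw [walk_mul_apply, hw, hu, walk_mul_apply]

/-- Words labelling closed walks at a vertex. -/
def loops (v : V) : Subgroup (FreeGroup α) where
  carrier := {w | walk step w v = v}
  one_mem' := by simp
  mul_mem' := by
    intro u w hu hw
    change walk step (u * w) v = v
    rw [walk_mul_apply, show walk step u v = v from hu, show walk step w v = v from hw]
  inv_mem' := by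
    intro u hu
    change walk step u⁻¹ v = v
    rw [walk_inv, Equiv.Perm.inv_eq_iff_eq]
    exact Eq.symm hu

lemma mem_loops {v : V} {w : FreeGroup α} : w ∈ loops step v ↔ walk step w v = v := Iff.rfl

variable (R : Type*) [CommRing R]

/-- The vertex permutation given by a generator, remembering the edges passed on the way. -/
noncomputable def chainStep (a : α) : Equiv.Perm (V × ((V × α) →₀ R)) where
  toFun p := (step a p.1, p.2 + Finsupp.single (p.1, a) 1)
  invFun p := ((step a)⁻¹ p.1, p.2 - Finsupp.single ((step a)⁻¹ p.1, a) 1)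
  left_inv p := by simp
  right_inv p := by simp

/-- The chain of edges passed by a walk. -/
noncomputable def path (v : V) (w : FreeGroup α) : (V × α) →₀ R :=
  (walk (chainStep step R) w (v, 0)).2

lemma walk_chainStep (w : FreeGroup α) (v : V) (x : (V × α) →₀ R) :
    walk (chainStep step R) w (v, x) = (walk step w v, x + path step R v w) := by
  have hfst : ∀ (w : FreeGroup α) p, (walk (chainStep step R) w p).1 = walk step w p.1 :=
    fun w p => walk_map (chainStep step R) Prod.fst (fun a v => rfl) w p
  have hadd : ∀ (w : FreeGroup α) (p : V × ((V × α) →₀ R)),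
      (walk (chainStep step R) w (p.1, x + p.2)) =
        ((walk (chainStep step R) w p).1, x + (walk (chainStep step R) w p).2) := by
    intro w p
    symm
    refine walk_map (chainStep step R) (fun p : V × ((V × α) →₀ R) => (p.1, x + p.2)) ?_ w p
    intro a p
    simp [chainStep, add_assoc]
  have := hadd w (v, 0)
  simp only [add_zero] at this
  rw [this, hfst]
  rfl

@[simp] lemma path_one (v : V) : path step R v 1 = 0 := by simp [path]

lemma path_mul (v : V) (u w : FreeGroup α) :
    path step R v (u * w) = path step R v u + path step R (walk step u v) w := by
  rw [path, walk_mul_apply, walk_chainStep step R u, zero_add, walk_chainStep]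

@[simp] lemma path_of (v : V) (a : α) : path step R v (of a) = Finsupp.single (v, a) 1 := by
  simp [path, chainStep]

lemma path_inv (v : V) (w : FreeGroup α) :
    path step R v w⁻¹ = -path step R ((walk step w)⁻¹ v) w := by
  have := path_mul step R v w⁻¹ w
  rw [inv_mul_cancel, path_one, walk_inv] at this
  exact eq_neg_of_add_eq_zero_left this.symm

/-- Additive functions of walks factor through the chain of edges. -/
lemma map_path {A : Type*} [AddCommGroup A] (T : ((V × α) →₀ R) →+ A) (φ : V → FreeGroup α → A)
    (hmul : ∀ v u w, φ v (u * w) = φ v u + φ (walk step u v) w)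
    (hof : ∀ v a, T (Finsupp.single (v, a) 1) = φ v (of a)) (v : V) (w : FreeGroup α) :
    T (path step R v w) = φ v w := by
  have hone : ∀ v, φ v 1 = 0 := by
    intro v
    have := hmul v 1 1
    simpa using this
  have hinv : ∀ v u, φ v u⁻¹ = -φ ((walk step u)⁻¹ v) u := by
    intro v u
    have := hmul v u⁻¹ u
    rw [inv_mul_cancel, hone, walk_inv] at this
    exact eq_neg_of_add_eq_zero_left this.symm
  induction w using FreeGroup.induction_on generalizing v with
  | C1 => simp [hone]
  | of a => simp [hof]
  | inv_of a ih => rw [path_inv, map_neg, ih, hinv]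
  | mul u w hu hw => rw [path_mul, map_add, hu, hw, hmul]

lemma edgeBoundary_path (v : V) (w : FreeGroup α) :
    edgeBoundary R (fun a => step a) (path step R v w) =
      Finsupp.single (walk step w v) 1 - Finsupp.single v 1 := by
  refine map_path step R (edgeBoundary R (fun a => step a)).toAddMonoidHom
    (fun v w => Finsupp.single (walk step w v) 1 - Finsupp.single v 1) ?_ ?_ v w
  · intro v u w
    rw [walk_mul_apply]; abel
  · intro v a
    simp [edgeBoundary]

lemma mapDomain_path {step' : α → Equiv.Perm V'} (f : V → V')
    (hf : ∀ a v, f (step a v) = step' a (f v)) (v : V) (w : FreeGroup α) :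
    Finsupp.mapDomain (Prod.map f id) (path step R v w) = path step' R (f v) w := by
  refine map_path step R (Finsupp.mapDomain.addMonoidHom (Prod.map f id))
    (fun v w => path step' R (f v) w) ?_ ?_ v w
  · intro v u w
    rw [path_mul, walk_map step f hf]
  · intro v a
    simp [Finsupp.mapDomain_single]

/-- Chains of closed walks at `v` add up. -/
lemma path_mul_of_mem {v : V} {u : FreeGroup α} (hu : u ∈ loops step v) (w : FreeGroup α) :
    path step R v (u * w) = path step R v u + path step R v w := by
  rw [path_mul, (mem_loops step).1 hu]

/-- The chain of a closed walk, as a homomorphism. -/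
noncomputable def loopChain (v : V) : loops step v →* Multiplicative ((V × α) →₀ R) where
  toFun w := Multiplicative.ofAdd (path step R v w)
  map_one' := by simp
  map_mul' u w := by
    rw [← ofAdd_add, Subgroup.coe_mul, path_mul_of_mem step R u.2]

lemma path_eq_zero_of_mem_commutator {v : V} {w : FreeGroup α}
    (hw : w ∈ ⁅loops step v, loops step v⁆) : path step R v w = 0 := by
  have hw' : w ∈ (commutator (loops step v)).map (loops step v).subtype := by
    rwa [commutator_def, Subgroup.map_commutator, ← MonoidHom.range_eq_map,
      Subgroup.range_subtype]
  obtain ⟨x, hx, rfl⟩ := hw'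
  have := Abelianization.commutator_subset_ker (loopChain step R v) hx
  exact this

lemma path_conj {v : V} {u w : FreeGroup α} (h : walk step w (walk step u v) = walk step u v) :
    path step R v (u * w * u⁻¹) = path step R (walk step u v) w := by
  rw [path_mul, path_mul, walk_mul_apply, h, path_inv]
  simp

lemma walk_conj {v : V} {u w : FreeGroup α} (h : walk step w (walk step u v) = walk step u v) :
    u * w * u⁻¹ ∈ loops step v := by
  rw [mem_loops, walk_mul_apply, walk_mul_apply, h]
  simp

/-- In a connected labelled graph, cycles are combinations of chains of closed walks. -/
theorem mem_span_loops {b : V} (hb : ∀ v, ∃ w, walk step w b = v) {z : (V × α) →₀ R}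
    (hz : edgeBoundary R (fun a => step a) z = 0) :
    z ∈ Submodule.span R (path step R b '' (loops step b : Set (FreeGroup α))) := by
  choose τ hτ using hb
  let Q : (V →₀ R) →ₗ[R] ((V × α) →₀ R) :=
    Finsupp.linearCombination R (fun v => path step R b (τ v))
  let l : V × α → FreeGroup α := fun e => τ e.1 * of e.2 * (τ (step e.2 e.1))⁻¹
  have hl : ∀ e, l e ∈ loops step b := by
    intro e
    rw [mem_loops, walk_mul_apply, walk_mul_apply, hτ, walk_of, walk_inv,
      Equiv.Perm.inv_eq_iff_eq, hτ]
  let Θ : ((V × α) →₀ R) →ₗ[R] ((V × α) →₀ R) :=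
    Finsupp.linearCombination R (fun e => path step R b (l e))
  have hΘ : Θ = LinearMap.id - Q ∘ₗ edgeBoundary R (fun a => step a) := by
    refine Finsupp.lhom_ext' fun e => LinearMap.ext_ring ?_
    simp only [Θ, Q, edgeBoundary, LinearMap.comp_apply, Finsupp.lsingle_apply,
      Finsupp.linearCombination_single, one_smul, LinearMap.sub_apply, LinearMap.id_apply,
      map_sub]
    rw [path_mul, path_mul, path_inv, walk_mul_apply, hτ, walk_of, path_of]
    rw [show (walk step (τ (step e.2 e.1)))⁻¹ (step e.2 e.1) = b by
      rw [Equiv.Perm.inv_eq_iff_eq, hτ]]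
    abel
  have hzΘ : z = Θ z := by rw [hΘ]; simp [hz]
  rw [hzΘ, Finsupp.linearCombination_apply]
  exact Submodule.sum_mem _ fun e _ => Submodule.smul_mem _ _
    (Submodule.subset_span ⟨l e, hl e, rfl⟩)

/-- If closed walks are generated by conjugates of `c`, then cycles are combinations of the
corresponding translates of the chain of `c`. -/
theorem mem_span_of_loops_eq_closure {b : V} (hb : ∀ v, ∃ w, walk step w b = v)
    {c : FreeGroup α} {T : Set (FreeGroup α)}
    (hT : loops step b = Subgroup.closure ((fun u => u * c * u⁻¹) '' T)) {z : (V × α) →₀ R}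
    (hz : edgeBoundary R (fun a => step a) z = 0) :
    z ∈ Submodule.span R ((fun u => path step R (walk step u b) c) '' T) := by
  refine Submodule.span_le.2 ?_ (mem_span_loops step R hb hz)
  have hmem : ∀ u ∈ T, u * c * u⁻¹ ∈ loops step b := fun u hu =>
    hT ▸ Subgroup.subset_closure ⟨u, hu, rfl⟩
  rintro _ ⟨w, hw, rfl⟩
  have hw' : w ∈ Subgroup.closure ((fun u => u * c * u⁻¹) '' T) := hT ▸ hw
  change path step R b w ∈ Submodule.span R ((fun u => path step R (walk step u b) c) '' T)
  clear hw
  induction hw' using Subgroup.closure_induction with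
  | mem x hx =>
    obtain ⟨u, hu, rfl⟩ := hx
    have := hmem u hu
    rw [mem_loops, walk_mul_apply, walk_mul_apply, walk_inv, Equiv.Perm.inv_eq_iff_eq] at this
    simp only
    rw [path_conj step R this]
    exact Submodule.subset_span ⟨u, hu, rfl⟩
  | one => simp
  | mul x y hx hy ihx ihy =>
    rw [path_mul_of_mem step R (hT ▸ hx)]
    exact add_mem ihx ihy
  | inv x hx ih =>
    have : (walk step x)⁻¹ b = b := by
      have : x ∈ loops step b := hT ▸ hx
      rw [Equiv.Perm.inv_eq_iff_eq]; exact Eq.symm this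
    rw [path_inv, this]
    exact neg_mem ih

/-- A closed walk with trivial integral chain is a product of commutators of closed walks. -/
theorem mem_commutator_of_path_eq_zero {b : V} (hb : ∀ v, ∃ w, walk step w b = v)
    {w : FreeGroup α} (hw : w ∈ loops step b) (h0 : path step ℤ b w = 0) :
    w ∈ ⁅loops step b, loops step b⁆ := by
  choose τ hτ using hb
  have hl : ∀ v u, τ v * u * (τ (walk step u v))⁻¹ ∈ loops step b := by
    intro v u
    rw [mem_loops, walk_mul_apply, walk_mul_apply, hτ, walk_inv, Equiv.Perm.inv_eq_iff_eq, hτ]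
  let φ : V → FreeGroup α → Additive (Abelianization (loops step b)) := fun v u =>
    Additive.ofMul (Abelianization.of ⟨_, hl v u⟩)
  let T : ((V × α) →₀ ℤ) →+ Additive (Abelianization (loops step b)) :=
    (Finsupp.linearCombination ℤ (fun e : V × α => φ e.1 (of e.2))).toAddMonoidHom
  have key := map_path step ℤ T φ (by
    intro v u w
    simp only [φ]
    rw [← ofMul_mul, ← _root_.map_mul]
    congr 2
    refine Subtype.ext ?_
    simp only [Subgroup.coe_mul, walk_mul_apply]
    group) (by intro v a; simp [T]) b w
  rw [h0, map_zero] at key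
  have hτb : τ b ∈ loops step b := by rw [mem_loops, hτ]
  have hw1 : Abelianization.of (⟨w, hw⟩ : loops step b) = 1 := by
    have h1 : (⟨τ b * w * (τ (walk step w b))⁻¹, hl b w⟩ : loops step b) =
        ⟨τ b, hτb⟩ * ⟨w, hw⟩ * ⟨τ b, hτb⟩⁻¹ := by
      refine Subtype.ext ?_
      simp only [Subgroup.coe_mul, Subgroup.coe_inv, (mem_loops step).1 hw]
    have h2 : Abelianization.of (⟨_, hl b w⟩ : loops step b) = 1 := key.symm
    rw [h1, _root_.map_mul, _root_.map_mul, _root_.map_inv, mul_comm, inv_mul_cancel_left] at h2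
    exact h2
  have hmem : (⟨w, hw⟩ : loops step b) ∈ commutator (loops step b) :=
    (QuotientGroup.eq_one_iff _).1 hw1
  have : w ∈ (commutator (loops step b)).map (loops step b).subtype := ⟨_, hmem, rfl⟩
  rwa [commutator_def, Subgroup.map_commutator, ← MonoidHom.range_eq_map,
    Subgroup.range_subtype] at this

end FreeGroup

namespace StackedWord

open FreeGroup

variable {α Λ V : Type*} [LinearOrder Λ] {L : ℕ} (W : StackedWord α L Λ)
  (step : α → Equiv.Perm V)

lemma walk_letter (y : α × Bool) : walk step (FreeGroup.mk [y]) = letterPerm step y := by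
  rcases y with ⟨a, b⟩
  cases b
  · rw [show FreeGroup.mk [(a, false)] = (FreeGroup.of a)⁻¹ from rfl, walk_inv, walk_of]; rfl
  · exact walk_of step a

lemma path_letter (o : V × ZMod L) : path step ℚ o.1 (FreeGroup.mk [W.letter o.2]) =
    W.boundary step (Finsupp.single o 1) := by
  rw [boundary, Finsupp.linearCombination_single, one_smul, edge, source]
  rcases h : W.letter o.2 with ⟨a, b⟩
  cases b
  · rw [show FreeGroup.mk [(a, false)] = (FreeGroup.of a)⁻¹ from rfl, path_inv, walk_of, path_of]
    simp [next_apply, letterPerm, h]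
  · exact path_of step ℚ o.1 a

lemma next_pow_apply (v : V) (j : ZMod L) (t : ℕ) :
    (W.next step ^ t) (v, j) = (walk step (subword W.letter j t) v, j + t) := by
  induction t with
  | zero => simp [subword_zero]
  | succ t ih =>
    rw [pow_succ', Equiv.Perm.mul_apply, ih, next_apply, subword_succ, walk_mul_apply, walk_letter]
    simp [add_assoc]

/-- The passages of the walk which reads `t` letters of the word, starting at `o`. -/
noncomputable def trace (o : V × ZMod L) (t : ℕ) : (V × ZMod L) →₀ ℚ :=
  ∑ s ∈ Finset.range t, Finsupp.single ((W.next step ^ s) o) 1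

lemma boundary_trace (v : V) (j : ZMod L) (t : ℕ) :
    W.boundary step (W.trace step (v, j) t) = path step ℚ v (subword W.letter j t) := by
  rw [trace]
  induction t with
  | zero => simp [subword_zero]
  | succ t ih =>
    rw [Finset.sum_range_succ, map_add, ih, subword_succ, path_mul, ← path_letter, next_pow_apply]

lemma trace_invariant {o : V × ZMod L} {t : ℕ} (h : (W.next step ^ t) o = o) (p : V × ZMod L) :
    W.trace step o t (W.next step p) = W.trace step o t p := by
  classical
  have h1 : ∀ q, W.trace step o t q =
      ∑ s ∈ Finset.range t, if (W.next step ^ s) o = q then (1 : ℚ) else 0 := by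
    intro q
    rw [trace, Finsupp.finsetSum_apply]
    exact Finset.sum_congr rfl fun s _ => Finsupp.single_apply
  rw [h1, h1]
  cases t with
  | zero => simp
  | succ t =>
    rw [Finset.sum_range_succ', Finset.sum_range_succ]
    congr 1
    · refine Finset.sum_congr rfl fun s _ => ?_
      simp only [pow_succ', Equiv.Perm.mul_apply, (W.next step).apply_eq_iff_eq]
    · have : (W.next step) ((W.next step ^ t) o) = o := by
        rwa [pow_succ', Equiv.Perm.mul_apply] at h
      conv_lhs => rw [pow_zero, Equiv.Perm.one_apply, ← this]
      simp only [(W.next step).apply_eq_iff_eq]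

lemma subword_mul_length (k : ℕ) :
    subword W.letter 0 (L * k) = subword W.letter 0 L ^ k := by
  induction k with
  | zero => simp [subword_zero]
  | succ k ih => rw [mul_add, mul_one, subword_add, ih, pow_succ]; simp

end StackedWord

namespace StackedWord

open FreeGroup

variable {α Λ V : Type*} [LinearOrder Λ] {L : ℕ} (W : StackedWord α L Λ)

/-- If the closed walks of a connected graph are generated by finitely many lifts of a power of the
word, the corresponding cells are linearly independent in homology. -/
theorem eq_zero_of_sum_path_eq_zero [NeZero L] {m : ℕ} (hm : m ≠ 0) (step : α → Equiv.Perm V)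
    {b : V} (hb : ∀ v, ∃ w, walk step w b = v) (T : Finset (FreeGroup α))
    (hT : loops step b = Subgroup.closure
      ((fun u => u * subword W.letter 0 L ^ m * u⁻¹) '' (T : Set (FreeGroup α))))
    {ι : Type*} (I : Finset ι) (u : ι → FreeGroup α) (hu : ∀ i ∈ I, u i ∈ T)
    (hdisj : ∀ i ∈ I, ∀ k ∈ I, ∀ s : ℕ,
      walk step (subword W.letter 0 L ^ s) (walk step (u k) b) = walk step (u i) b → i = k)
    (x : ι → ℚ)
    (hx : ∑ i ∈ I, x i • path step ℚ (walk step (u i) b) (subword W.letter 0 L ^ m) = 0) :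
    ∀ i ∈ I, x i = 0 := by
  classical
  set c := subword W.letter 0 L with hc
  have hclosed : ∀ v ∈ T, walk step (c ^ m) (walk step v b) = walk step v b := by
    intro v hv
    have : v * c ^ m * v⁻¹ ∈ loops step b := hT ▸ Subgroup.subset_closure ⟨v, hv, rfl⟩
    rw [mem_loops, walk_mul_apply, walk_mul_apply, walk_inv, Equiv.Perm.inv_eq_iff_eq] at this
    exact this
  have hcm : c ^ m = subword W.letter 0 (L * m) := (W.subword_mul_length m).symm
  have hloop : ∀ v ∈ T, (W.next step ^ (L * m)) (walk step v b, 0) = (walk step v b, 0) := by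
    intro v hv
    rw [next_pow_apply, ← hcm, hclosed v hv]
    simp
  let O : Finset (V × ZMod L) := T.biUnion fun v =>
    (Finset.range (L * m)).image fun s => (W.next step ^ s) (walk step v b, 0)
  have hLm : 0 < L * m := Nat.mul_pos (Nat.pos_of_ne_zero (NeZero.ne L)) (Nat.pos_of_ne_zero hm)
  have hnext : ∀ o ∈ O, W.next step o ∈ O := by
    intro o ho
    simp only [O, Finset.mem_biUnion, Finset.mem_image, Finset.mem_range] at ho ⊢
    obtain ⟨v, hv, s, hs, rfl⟩ := ho
    refine ⟨v, hv, ?_⟩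
    by_cases hs' : s + 1 < L * m
    · exact ⟨s + 1, hs', by rw [pow_succ', Equiv.Perm.mul_apply]⟩
    · refine ⟨0, hLm, ?_⟩
      have : s + 1 = L * m := by omega
      rw [pow_zero, Equiv.Perm.one_apply, ← Equiv.Perm.mul_apply, ← pow_succ', this, hloop v hv]
  have hO : ∀ o, W.next step o ∈ O ↔ o ∈ O := by
    have hmap : O.map (W.next step).toEmbedding = O := by
      refine Finset.eq_of_subset_of_card_le ?_ (Finset.card_map _).ge
      intro o ho
      obtain ⟨p, hp, rfl⟩ := Finset.mem_map.1 ho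
      exact hnext p hp
    intro o
    conv_lhs => rw [← hmap]
    exact Finset.mem_map' _
  have htrace : ∀ v ∈ T, W.trace step (walk step v b, 0) (L * m) ∈ W.cellChains step O := by
    intro v hv
    refine ⟨W.trace_invariant step (hloop v hv), ?_⟩
    refine (Finsupp.support_finsetSum).trans ?_
    intro o ho
    obtain ⟨s, hs, ho⟩ := Finset.mem_biUnion.1 ho
    have := Finsupp.support_single_subset ho
    rw [Finset.mem_singleton] at this
    exact Finset.mem_biUnion.2 ⟨v, hv, Finset.mem_image.2 ⟨s, hs, this.symm⟩⟩
  have hsurj : ∀ z : (V × α) →₀ ℚ, edgeBoundary ℚ (fun a => step a) z = 0 →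
      ∃ β ∈ W.cellChains step O, W.boundary step β = z := by
    intro z hz
    have hspan := mem_span_of_loops_eq_closure step ℚ hb hT hz
    refine (Submodule.span_le (p := (W.cellChains step O).map (W.boundary step))).2 ?_ hspan
    rintro _ ⟨v, hv, rfl⟩
    refine ⟨_, htrace v hv, ?_⟩
    rw [boundary_trace, ← hcm]
  have hβ := W.boundary_injOn step _ O rfl hO (fun z _ hz => hsurj z hz)
    (∑ i ∈ I, x i • W.trace step (walk step (u i) b, 0) (L * m))
    (Submodule.sum_mem _ fun i hi => Submodule.smul_mem _ _ (htrace _ (hu i hi)))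
    (by
      rw [map_sum, ← hx]
      refine Finset.sum_congr rfl fun i _ => ?_
      rw [map_smul, boundary_trace, ← hcm])
  intro i hi
  have heval := DFunLike.congr_fun hβ (walk step (u i) b, 0)
  rw [Finsupp.finsetSum_apply, Finset.sum_eq_single_of_mem i hi] at heval
  · rw [Finsupp.smul_apply, smul_eq_mul, Finsupp.zero_apply, mul_eq_zero] at heval
    refine heval.resolve_right (ne_of_gt ?_)
    rw [trace, Finsupp.finsetSum_apply]
    refine Finset.sum_pos' (fun s _ => ?_) ⟨0, Finset.mem_range.2 hLm, ?_⟩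
    · rw [Finsupp.single_apply]; split_ifs <;> norm_num
    · simp
  · intro k hk hki
    rw [Finsupp.smul_apply, trace, Finsupp.finsetSum_apply, Finset.sum_eq_zero, smul_zero]
    intro s _
    rw [Finsupp.single_apply, if_neg]
    intro h
    rw [next_pow_apply, Prod.mk.injEq, zero_add, ZMod.natCast_eq_zero_iff] at h
    obtain ⟨h1, q, rfl⟩ := h
    rw [W.subword_mul_length] at h1
    exact hki (hdisj i hi k hk q h1).symm

end StackedWord

lemma Subgroup.exists_finset_mem_closure_image {G ι : Type*} [Group G] (f : ι → G) {w : G}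
    (hw : w ∈ closure (Set.range f)) : ∃ T : Finset ι, w ∈ closure (f '' (T : Set ι)) := by
  classical
  induction hw using closure_induction with
  | mem x hx =>
    obtain ⟨i, rfl⟩ := hx
    exact ⟨{i}, subset_closure ⟨i, by simp, rfl⟩⟩
  | one => exact ⟨∅, one_mem _⟩
  | mul x y _ _ ihx ihy =>
    obtain ⟨S, hS⟩ := ihx
    obtain ⟨T, hT⟩ := ihy
    refine ⟨S ∪ T, mul_mem ?_ ?_⟩
    · exact closure_mono (Set.image_mono (by simp)) hS
    · exact closure_mono (Set.image_mono (by simp)) hT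
  | inv x _ ih =>
    obtain ⟨T, hT⟩ := ih
    exact ⟨T, inv_mem hT⟩

lemma Subgroup.exists_finset_mem_commutator_closure {G ι : Type*} [Group G] (f : ι → G) {w : G}
    (hw : w ∈ ⁅closure (Set.range f), closure (Set.range f)⁆) (T₀ : Finset ι) :
    ∃ T : Finset ι, T₀ ⊆ T ∧
      w ∈ ⁅closure (f '' (T : Set ι)), closure (f '' (T : Set ι))⁆ := by
  classical
  have hmono : ∀ {S T : Finset ι}, S ⊆ T →
      closure (f '' (S : Set ι)) ≤ closure (f '' (T : Set ι)) := fun h =>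
    closure_mono (Set.image_mono (Finset.coe_subset.2 h))
  rw [commutator_def] at hw
  induction hw using closure_induction with
  | mem x hx =>
    obtain ⟨a, ha, b, hb, rfl⟩ := hx
    obtain ⟨S, hS⟩ := exists_finset_mem_closure_image f ha
    obtain ⟨T, hT⟩ := exists_finset_mem_closure_image f hb
    refine ⟨T₀ ∪ (S ∪ T), Finset.subset_union_left, commutator_mem_commutator ?_ ?_⟩
    · exact hmono (Finset.subset_union_left.trans Finset.subset_union_right) hS
    · exact hmono (Finset.subset_union_right.trans Finset.subset_union_right) hT
  | one => exact ⟨T₀, subset_rfl, one_mem _⟩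
  | mul x y _ _ ihx ihy =>
    obtain ⟨S, hS0, hS⟩ := ihx
    obtain ⟨T, hT0, hT⟩ := ihy
    refine ⟨S ∪ T, hS0.trans Finset.subset_union_left, mul_mem ?_ ?_⟩
    · exact commutator_mono (hmono Finset.subset_union_left) (hmono Finset.subset_union_left) hS
    · exact commutator_mono (hmono Finset.subset_union_right) (hmono Finset.subset_union_right) hT
  | inv x _ ih =>
    obtain ⟨T, hT0, hT⟩ := ih
    exact ⟨T, hT0, inv_mem hT⟩

lemma Subgroup.normalClosure_singleton_eq_closure {G : Type*} [Group G] (g : G) :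
    normalClosure {g} = closure (Set.range fun u => u * g * u⁻¹) := by
  rw [normalClosure]
  congr 1
  ext x
  simp [Group.conjugatesOfSet, conjugatesOf, isConj_iff]

namespace FreeGroup

variable {α V G : Type*} [Group G]

/-- The Cayley graph of a quotient of a free group. -/
def cayleyStep (π : FreeGroup α →* G) (a : α) : Equiv.Perm G := Equiv.mulRight (π (of a))

lemma walk_cayleyStep (π : FreeGroup α →* G) (w : FreeGroup α) (g : G) :
    walk (cayleyStep π) w g = g * π w := by
  induction w using FreeGroup.induction_on generalizing g with
  | C1 => simp
  | of a => simp [cayleyStep]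
  | inv_of a _ => simp [cayleyStep]
  | mul u w hu hw => rw [walk_mul_apply, hu, hw, _root_.map_mul, mul_assoc]

/-- The Schreier graph of a subgroup of a free group. -/
def schreierStep (M : Subgroup (FreeGroup α)) (a : α) : Equiv.Perm (FreeGroup α ⧸ M) :=
  MulAction.toPerm (of a)⁻¹

lemma walk_schreierStep (M : Subgroup (FreeGroup α)) (w : FreeGroup α) (v : FreeGroup α ⧸ M) :
    walk (schreierStep M) w v = w⁻¹ • v := by
  induction w using FreeGroup.induction_on generalizing v with
  | C1 => simp
  | of a => simp [schreierStep]
  | inv_of a _ => rw [walk_inv, walk_of, Equiv.Perm.inv_eq_iff_eq]; simp [schreierStep]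
  | mul u w hu hw => rw [walk_mul_apply, hu, hw, mul_inv_rev, mul_smul]

variable (step : α → Equiv.Perm V) (R : Type*) [CommRing R]

lemma path_zpow {v : V} {w : FreeGroup α} (hw : w ∈ loops step v) (k : ℤ) :
    path step R v (w ^ k) = k • path step R v w := by
  have h := _root_.map_zpow (loopChain step R v) ⟨w, hw⟩ k
  exact congrArg Multiplicative.toAdd h

/-- The chain of a product of powers of conjugates. -/
lemma path_prod_conj_zpow {ι : Type*} (b : V) (c : FreeGroup α) (u : ι → FreeGroup α) (x : ι → ℤ)
    (l : List ι) (h : ∀ i ∈ l, walk step c (walk step (u i) b) = walk step (u i) b) :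
    path step R b (l.map fun i => (u i * c * (u i)⁻¹) ^ x i).prod =
      (l.map fun i => x i • path step R (walk step (u i) b) c).sum := by
  induction l with
  | nil => simp
  | cons i l ih =>
    rw [List.map_cons, List.prod_cons, List.map_cons, List.sum_cons]
    have hi := walk_conj step (h i (by simp))
    rw [path_mul_of_mem step R (zpow_mem hi _), path_zpow step R hi, path_conj step R
      (h i (by simp)), ih fun k hk => h k (List.mem_cons_of_mem _ hk)]

end FreeGroup

namespace StackedWord

open FreeGroup

variable {α Λ G : Type*} [LinearOrder Λ] {L : ℕ} (W : StackedWord α L Λ) [Group G]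

/-- The relation module of a one-relator group is freely generated, up to the obvious torsion, by
the relator. -/
theorem eq_zero_of_sum_cayley_path_eq_zero [NeZero L] {m : ℕ} (hm : m ≠ 0)
    (π : FreeGroup α →* G) (hπ : Function.Surjective π)
    (hker : π.ker = Subgroup.normalClosure {subword W.letter 0 L ^ m})
    {ι : Type*} (I : Finset ι) (u : ι → FreeGroup α)
    (hdisj : ∀ i ∈ I, ∀ k ∈ I, ∀ s : ℕ, π (u k * subword W.letter 0 L ^ s) = π (u i) → i = k)
    (x : ι → ℤ)
    (hx : ∑ i ∈ I, x i • path (cayleyStep π) ℤ (π (u i)) (subword W.letter 0 L ^ m) = 0) :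
    ∀ i ∈ I, x i = 0 := by
  classical
  set c := subword W.letter 0 L with hc
  have hloops : loops (cayleyStep π) 1 = π.ker := by
    ext w
    rw [mem_loops, walk_cayleyStep, one_mul, MonoidHom.mem_ker]
  have hcm : π (c ^ m) = 1 := by
    rw [← MonoidHom.mem_ker, hker]
    exact Subgroup.subset_normalClosure rfl
  have hconn : ∀ g : G, ∃ w, walk (cayleyStep π) w 1 = g := by
    intro g
    obtain ⟨w, rfl⟩ := hπ g
    exact ⟨w, by rw [walk_cayleyStep, one_mul]⟩
  let w := (I.toList.map fun i => (u i * c ^ m * (u i)⁻¹) ^ x i).prod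
  have hw : w ∈ loops (cayleyStep π) 1 := by
    refine Subgroup.list_prod_mem _ fun y hy => ?_
    obtain ⟨i, _, rfl⟩ := List.mem_map.1 hy
    refine zpow_mem (walk_conj _ ?_) _
    rw [walk_cayleyStep, hcm, mul_one]
  have hw0 : path (cayleyStep π) ℤ 1 w = 0 := by
    rw [path_prod_conj_zpow _ _ _ _ _ _ _ (fun i _ => by rw [walk_cayleyStep, hcm, mul_one]),
      Finset.sum_map_toList, ← hx]
    exact Finset.sum_congr rfl fun i _ => by rw [walk_cayleyStep, one_mul]
  have hcomm := mem_commutator_of_path_eq_zero _ hconn hw hw0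
  rw [hloops, hker, Subgroup.normalClosure_singleton_eq_closure] at hcomm
  obtain ⟨T, hIT, hwT⟩ := Subgroup.exists_finset_mem_commutator_closure _ hcomm (I.image u)
  set M := Subgroup.closure ((fun u => u * c ^ m * u⁻¹) '' (T : Set (FreeGroup α))) with hM
  have hMker : M ≤ π.ker := by
    rw [hker, Subgroup.normalClosure_singleton_eq_closure]
    exact Subgroup.closure_mono (Set.image_subset_range _ _)
  let b : FreeGroup α ⧸ M := ((1 : FreeGroup α) : FreeGroup α ⧸ M)
  have hwalk : ∀ u, walk (schreierStep M) u b = ((u⁻¹ : FreeGroup α) : FreeGroup α ⧸ M) := by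
    intro u
    rw [walk_schreierStep, MulAction.Quotient.smul_coe, smul_eq_mul, mul_one]
  have hloopsM : loops (schreierStep M) b = M := by
    ext v
    rw [mem_loops, hwalk, QuotientGroup.eq, inv_inv, mul_one]
  have huT : ∀ i ∈ I, u i ∈ T := fun i hi => hIT (Finset.mem_image_of_mem _ hi)
  have hclosed : ∀ i ∈ I, walk (schreierStep M) (c ^ m) (walk (schreierStep M) (u i) b) =
      walk (schreierStep M) (u i) b := by
    intro i hi
    have : u i * c ^ m * (u i)⁻¹ ∈ loops (schreierStep M) b :=
      hloopsM.ge (Subgroup.subset_closure ⟨u i, huT i hi, rfl⟩)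
    rwa [mem_loops, walk_mul_apply, walk_mul_apply, walk_inv, Equiv.Perm.inv_eq_iff_eq] at this
  have hpath : path (schreierStep M) ℚ b w = 0 :=
    path_eq_zero_of_mem_commutator _ _ (by rw [hloopsM]; exact hwT)
  rw [path_prod_conj_zpow _ _ _ _ _ _ _ (fun i hi => hclosed i (Finset.mem_toList.1 hi)),
    Finset.sum_map_toList] at hpath
  have key := W.eq_zero_of_sum_path_eq_zero hm (schreierStep M) (b := b) ?_ T hloopsM I u huT ?_
    (fun i => (x i : ℚ)) ?_
  · intro i hi
    exact_mod_cast key i hi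
  · intro v
    obtain ⟨v, rfl⟩ := QuotientGroup.mk_surjective v
    exact ⟨v⁻¹, by rw [hwalk, inv_inv]⟩
  · intro i hi k hk s h
    rw [← walk_mul_apply, hwalk, hwalk, QuotientGroup.eq, inv_inv] at h
    have := hMker h
    rw [MonoidHom.mem_ker, _root_.map_mul, _root_.map_inv, mul_inv_eq_one] at this
    exact hdisj i hi k hk s this
  · rw [← hpath]
    exact Finset.sum_congr rfl fun i _ => by rw [Int.cast_smul_eq_zsmul]

end StackedWord

namespace ModuleCat

variable {A : Type} [Ring A] {M₀ M₁ M₂ N : ModuleCat.{0} A}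

/-- The terms of a three-term chain complex. -/
noncomputable def threeTermX (M₀ M₁ M₂ : ModuleCat.{0} A) : ℕ → ModuleCat.{0} A
  | 0 => M₀
  | 1 => M₁
  | 2 => M₂
  | _ + 3 => ModuleCat.of A PUnit

/-- The differentials of a three-term chain complex. -/
noncomputable def threeTermD (d₁ : M₁ ⟶ M₀) (d₂ : M₂ ⟶ M₁) :
    ∀ n, threeTermX M₀ M₁ M₂ (n + 1) ⟶ threeTermX M₀ M₁ M₂ n
  | 0 => d₁
  | 1 => d₂
  | _ + 2 => 0

/-- A three-term chain complex. -/
noncomputable def threeTerm (d₁ : M₁ ⟶ M₀) (d₂ : M₂ ⟶ M₁) (h : d₂ ≫ d₁ = 0) :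
    ChainComplex (ModuleCat.{0} A) ℕ :=
  ChainComplex.of (threeTermX M₀ M₁ M₂) (threeTermD d₁ d₂) (by
    rintro (_ | _ | n)
    · exact h
    · exact Limits.zero_comp
    · exact Limits.zero_comp)

lemma threeTerm_d (d₁ : M₁ ⟶ M₀) (d₂ : M₂ ⟶ M₁) (h : d₂ ≫ d₁ = 0) (n : ℕ) :
    (threeTerm d₁ d₂ h).d (n + 1) n = threeTermD d₁ d₂ n :=
  ChainComplex.of_d _ _ n

/-- An exact sequence `0 → M₂ → M₁ → M₀ → N → 0` with projective `Mᵢ`, as a projective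
resolution. -/
theorem exists_projectiveResolution (d₁ : M₁ ⟶ M₀) (d₂ : M₂ ⟶ M₁) (ε : M₀ ⟶ N)
    [Projective M₀] [Projective M₁] [Projective M₂]
    (hε : Function.Surjective ε) (h₀ : Function.Exact d₁ ε) (h₁ : Function.Exact d₂ d₁)
    (h₂ : Function.Injective d₂) :
    ∃ P : ProjectiveResolution N, ∀ i, P.complex.X i = threeTermX M₀ M₁ M₂ i := by
  have w₁ : d₂ ≫ d₁ = 0 := by
    ext x
    exact h₁.apply_apply_eq_zero x
  have w₀ : d₁ ≫ ε = 0 := by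
    ext x
    exact h₀.apply_apply_eq_zero x
  refine ⟨{ complex := threeTerm d₁ d₂ w₁
            projective := ?_
            π := (ChainComplex.toSingle₀Equiv _ _).symm ⟨ε, by
              rw [threeTerm_d]; exact w₀⟩
            quasiIso := ⟨fun n => ?_⟩ }, fun i => rfl⟩
  · rintro (_ | _ | _ | n)
    · assumption
    · assumption
    · assumption
    · change Projective (ModuleCat.of A PUnit)
      infer_instance
  · cases n with
    | zero =>
      rw [ChainComplex.quasiIsoAt₀_iff, ShortComplex.quasiIso_iff_of_zeros']
      · refine (ShortComplex.exact_and_epi_g_iff_of_iso (S₂ := ShortComplex.mk d₁ ε w₀) ?_).2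
          ⟨?_, ?_⟩
        · exact ShortComplex.isoMk (Iso.refl _) (Iso.refl _) (Iso.refl _)
            (by simp [threeTerm_d]; rfl)
            (by
              have h := ChainComplex.toSingle₀Equiv_symm_apply_f_zero
                (C := threeTerm d₁ d₂ w₁) ε (by rw [threeTerm_d]; exact w₀)
              exact (Category.id_comp ε).trans (h.symm.trans (Category.comp_id _).symm))
        · rw [ShortComplex.moduleCat_exact_iff]
          intro x hx
          exact (h₀ x).1 hx
        · exact (ModuleCat.epi_iff_surjective _).2 hε
      all_goals rfl
    | succ n =>
      rw [quasiIsoAt_iff_exactAt']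
      · rw [HomologicalComplex.exactAt_iff' _ (n + 1 + 1) (n + 1) n (by simp) (by simp),
          ShortComplex.moduleCat_exact_iff]
        intro x hx
        simp only [HomologicalComplex.sc', HomologicalComplex.shortComplexFunctor'] at x hx ⊢
        rw [threeTerm_d] at hx ⊢
        match n, x, hx with
        | 0, x, hx => exact (h₁ x).1 hx
        | 1, x, hx => exact ⟨0, (map_zero _).trans (h₂ (hx.trans (map_zero _).symm)).symm⟩
        | n + 2, x, hx => exact ⟨0, Subsingleton.elim (α := PUnit) _ _⟩
      · apply ChainComplex.exactAt_succ_single_obj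

end ModuleCat

namespace Representation

variable {K X : Type*} [Group K]

/-- The integral permutation representation of an action by permutations. -/
noncomputable def ofPerm (a : K →* Equiv.Perm X) : Representation ℤ K (X →₀ ℤ) where
  toFun g := Finsupp.lmapDomain ℤ ℤ (a g)
  map_one' := by ext; simp
  map_mul' g h := by ext; simp

@[simp] lemma ofPerm_single (a : K →* Equiv.Perm X) (g : K) (x : X) (t : ℤ) :
    ofPerm a g (Finsupp.single x t) = Finsupp.single (a g x) t := by
  simp [ofPerm]

/-- A free permutation representation with a set of orbit representatives is a free module. -/
theorem nonempty_ofPerm_linearEquiv (a : K →* Equiv.Perm X) {Ω : Type*} (s : Ω → X)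
    (hs : Function.Bijective fun p : Ω × K => a p.2 (s p.1)) :
    Nonempty ((ofPerm a).asModule ≃ₗ[MonoidAlgebra ℤ K] (Ω →₀ MonoidAlgebra ℤ K)) := by
  let l : (Ω →₀ MonoidAlgebra ℤ K) →ₗ[MonoidAlgebra ℤ K] (ofPerm a).asModule :=
    Finsupp.linearCombination _ fun ω => (ofPerm a).asModuleEquiv.symm (Finsupp.single (s ω) 1)
  let e : (Ω × K →₀ ℤ) ≃+ (Ω →₀ MonoidAlgebra ℤ K) :=
    Finsupp.curryAddEquiv.trans (Finsupp.mapRange.addEquiv MonoidAlgebra.coeffAddEquiv.symm)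
  let f : (Ω × K →₀ ℤ) ≃+ (ofPerm a).asModule :=
    (Finsupp.domCongr (Equiv.ofBijective _ hs)).trans (ofPerm a).asModuleEquiv.symm.toAddEquiv
  have h : l.toAddMonoidHom.comp e.toAddMonoidHom = f.toAddMonoidHom := by
    refine Finsupp.addHom_ext fun p t => ?_
    have he : e (Finsupp.single p t) = Finsupp.single p.1 (MonoidAlgebra.single p.2 t) := by
      simp [e]
    change l (e (Finsupp.single p t)) = f (Finsupp.single p t)
    rw [he, Finsupp.linearCombination_single]
    apply (ofPerm a).asModuleEquiv.injective
    simp [f]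
    rfl
  have hl : Function.Bijective l := by
    have h' : ⇑l = f ∘ e.symm := by
      funext x
      have := DFunLike.congr_fun h (e.symm x)
      simpa using this
    rw [h']
    exact f.bijective.comp e.symm.bijective
  exact ⟨(LinearEquiv.ofBijective l hl).symm⟩

/-- A module of a permutation representation. -/
noncomputable abbrev permModule {K X : Type} [Group K] (a : K →* Equiv.Perm X) :
    ModuleCat.{0} (MonoidAlgebra ℤ K) :=
  ModuleCat.of (MonoidAlgebra ℤ K) (ofPerm a).asModule

/-- The map of modules given by an equivariant map defined on a permutation representation. -/
noncomputable def permModuleHom {K X : Type} {V : Type} [Group K] [AddCommGroup V]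
    (a : K →* Equiv.Perm X) (ρ : Representation ℤ K V) (f : (X →₀ ℤ) →ₗ[ℤ] V)
    (hf : ∀ g x, f (Finsupp.single (a g x) 1) = ρ g (f (Finsupp.single x 1))) :
    permModule a ⟶ ModuleCat.of (MonoidAlgebra ℤ K) ρ.asModule :=
  ModuleCat.ofHom (IntertwiningMap.equivLinearMapAsModule _ _
    { toLinearMap := f
      isIntertwining' g := by
        ext x
        simpa using hf g x })

end Representation

open Representation in
/-- An exact complex of free permutation modules of length two which augments to `ℤ`. -/
theorem HasFreeResOfRanks.of_permModules {K X₀ X₁ X₂ Ω₀ Ω₁ Ω₂ : Type} [Group K] [Nonempty X₀]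
    [Finite Ω₀] [Finite Ω₁] [Finite Ω₂]
    (a₀ : K →* Equiv.Perm X₀) (a₁ : K →* Equiv.Perm X₁) (a₂ : K →* Equiv.Perm X₂)
    (s₀ : Ω₀ → X₀) (s₁ : Ω₁ → X₁) (s₂ : Ω₂ → X₂)
    (hs₀ : Function.Bijective fun p : Ω₀ × K => a₀ p.2 (s₀ p.1))
    (hs₁ : Function.Bijective fun p : Ω₁ × K => a₁ p.2 (s₁ p.1))
    (hs₂ : Function.Bijective fun p : Ω₂ × K => a₂ p.2 (s₂ p.1))
    (d₁ : (X₁ →₀ ℤ) →ₗ[ℤ] (X₀ →₀ ℤ)) (d₂ : (X₂ →₀ ℤ) →ₗ[ℤ] (X₁ →₀ ℤ))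
    (hd₁ : ∀ g x, d₁ (Finsupp.single (a₁ g x) 1) = ofPerm a₀ g (d₁ (Finsupp.single x 1)))
    (hd₂ : ∀ g x, d₂ (Finsupp.single (a₂ g x) 1) = ofPerm a₁ g (d₂ (Finsupp.single x 1)))
    (h₀ : Function.Exact d₁ (Finsupp.linearCombination ℤ fun _ : X₀ => (1 : ℤ)))
    (h₁ : Function.Exact d₂ d₁) (h₂ : Function.Injective d₂) :
    HasFreeResOfRanks K 2 fun
      | 0 => Nat.card Ω₀
      | 1 => Nat.card Ω₁
      | 2 => Nat.card Ω₂
      | _ => 0 := by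
  have hfree : ∀ {X Ω : Type} [Finite Ω] (a : K →* Equiv.Perm X) (s : Ω → X),
      Function.Bijective (fun p : Ω × K => a p.2 (s p.1)) →
      Nonempty (permModule a ≃ₗ[MonoidAlgebra ℤ K] (Fin (Nat.card Ω) →₀ MonoidAlgebra ℤ K)) := by
    intro X Ω _ a s h
    obtain ⟨e⟩ := nonempty_ofPerm_linearEquiv a s h
    exact ⟨e.trans (Finsupp.domLCongr (Finite.equivFin Ω))⟩
  have hproj : ∀ {X Ω : Type} [Finite Ω] (a : K →* Equiv.Perm X) (s : Ω → X),
      Function.Bijective (fun p : Ω × K => a p.2 (s p.1)) → Projective (permModule a) := by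
    intro X Ω _ a s h
    obtain ⟨e⟩ := hfree a s h
    have : Module.Projective (MonoidAlgebra ℤ K) (permModule a) := .of_equiv e.symm
    infer_instance
  have := hproj a₀ s₀ hs₀
  have := hproj a₁ s₁ hs₁
  have := hproj a₂ s₂ hs₂
  obtain ⟨P, hP⟩ := ModuleCat.exists_projectiveResolution
    (permModuleHom a₁ (ofPerm a₀) d₁ hd₁) (permModuleHom a₂ (ofPerm a₁) d₂ hd₂)
    (permModuleHom a₀ (Representation.trivial ℤ K ℤ)
      (Finsupp.linearCombination ℤ fun _ : X₀ => (1 : ℤ)) (by simp))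
    (by
      obtain ⟨x⟩ := ‹Nonempty X₀›
      exact fun (t : ℤ) => ⟨Finsupp.single x t,
        (Finsupp.linearCombination_single ℤ t x).trans (mul_one t)⟩)
    h₀ h₁ h₂
  refine ⟨P, ?_, ?_⟩
  · rintro (_ | _ | _ | n)
    · rw [hP]
      exact hfree a₀ s₀ hs₀
    · rw [hP]
      exact hfree a₁ s₁ hs₁
    · rw [hP]
      exact hfree a₂ s₂ hs₂
    · rw [hP]
      exact ⟨(0 : (PUnit : Type) ≃ₗ[MonoidAlgebra ℤ K] (Fin 0 →₀ MonoidAlgebra ℤ K))⟩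
  · rintro (_ | _ | _ | n) hn
    · omega
    · omega
    · omega
    · rfl

section

open FreeGroup Representation

/-- The orbits of a free action, indexed by the values of an invariant which separates them. -/
lemma bijective_perm_surjInv {K X Ω : Type*} [Group K] (a : K →* Equiv.Perm X) {p : X → Ω}
    (hp : Function.Surjective p) (hinv : ∀ k x, p (a k x) = p x)
    (htrans : ∀ x y, p x = p y → ∃ k, a k x = y) (hfree : ∀ k x, a k x = x → k = 1) :
    Function.Bijective fun q : Ω × K => a q.2 (Function.surjInv hp q.1) := by
  refine ⟨?_, fun x => ?_⟩
  · rintro ⟨i, k⟩ ⟨j, l⟩ h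
    dsimp only at h
    have hij : i = j := by
      have := congrArg p h
      rwa [hinv, hinv, Function.surjInv_eq hp, Function.surjInv_eq hp] at this
    subst hij
    have hkl : l⁻¹ * k = 1 := hfree _ (Function.surjInv hp i) (by
      rw [_root_.map_mul, _root_.map_inv, Equiv.Perm.mul_apply, h]
      exact (a l).symm_apply_apply _)
    rw [inv_mul_eq_one.1 hkl]
  · obtain ⟨k, hk⟩ := htrans (Function.surjInv hp (p x)) x (Function.surjInv_eq hp _)
    exact ⟨(p x, k), hk⟩

namespace FreeGroup

variable {α G : Type*} [Group G] (π : FreeGroup α →* G)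

/-- The action of a group on the edges of a Cayley graph. -/
def edgePerm (α G : Type*) [Group G] : G →* Equiv.Perm (G × α) where
  toFun g := (Equiv.mulLeft g).prodCongr (Equiv.refl α)
  map_one' := by ext <;> simp
  map_mul' g h := by ext <;> simp [mul_assoc]

@[simp] lemma edgePerm_apply (g : G) (e : G × α) : edgePerm α G g e = (g * e.1, e.2) := rfl

lemma ofPerm_edgePerm_path (g v : G) (w : FreeGroup α) :
    ofPerm (edgePerm α G) g (path (cayleyStep π) ℤ v w) = path (cayleyStep π) ℤ (g * v) w :=
  mapDomain_path (cayleyStep π) ℤ (step' := cayleyStep π) (g * ·)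
    (fun a v => (mul_assoc g v (π (of a))).symm) v w

lemma edgeBoundary_cayleyStep_single (e : G × α) :
    edgeBoundary ℤ (fun a => cayleyStep π a) (Finsupp.single e 1) =
      Finsupp.single (e.1 * π (of e.2)) 1 - Finsupp.single e.1 1 := by
  have := edgeBoundary_path (cayleyStep π) ℤ e.1 (of e.2)
  rwa [path_of, walk_cayleyStep] at this

lemma loops_cayleyStep_one : loops (cayleyStep π) 1 = π.ker := by
  ext w
  rw [mem_loops, walk_cayleyStep, one_mul, MonoidHom.mem_ker]

variable {π}

lemma exact_edgeBoundary (hπ : Function.Surjective π) :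
    Function.Exact (edgeBoundary ℤ fun a => cayleyStep π a)
      (Finsupp.linearCombination ℤ fun _ : G => (1 : ℤ)) := by
  intro y
  constructor
  · intro hy
    have key : ∀ y : G →₀ ℤ, y - Finsupp.single 1 (Finsupp.linearCombination ℤ (fun _ => (1 : ℤ)) y)
        ∈ LinearMap.range (edgeBoundary ℤ fun a => cayleyStep π a) := by
      intro y
      induction y using Finsupp.induction_linear with
      | zero => simp
      | add x y hx hy =>
        rw [_root_.map_add, Finsupp.single_add, add_sub_add_comm]
        exact add_mem hx hy
      | single g t =>
        obtain ⟨w, rfl⟩ := hπ g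
        refine ⟨t • path (cayleyStep π) ℤ 1 w, ?_⟩
        rw [map_smul, edgeBoundary_path, walk_cayleyStep]
        simp [smul_sub]
    simpa [hy] using key y
  · rintro ⟨x, rfl⟩
    induction x using Finsupp.induction_linear with
    | zero => simp
    | add x y hx hy => rw [_root_.map_add, _root_.map_add, hx, hy, add_zero]
    | single e t =>
      rw [← mul_one t, ← smul_eq_mul, ← Finsupp.smul_single, map_smul,
        edgeBoundary_cayleyStep_single]
      simp

variable (π) in
/-- The boundary of the two-cells of the Cayley complex of `⟨α ∣ c ^ m⟩`, one for each coset
of the subgroup generated by `c`. -/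
noncomputable def cellBoundary (c : FreeGroup α) (m : ℕ) :
    ((G ⧸ Subgroup.zpowers (π c)) →₀ ℤ) →ₗ[ℤ] ((G × α) →₀ ℤ) :=
  Finsupp.linearCombination ℤ fun q => path (cayleyStep π) ℤ q.out (c ^ m)

variable {c : FreeGroup α} {m : ℕ}

lemma cellBoundary_single (hc : π c ^ m = 1) (g : G) :
    cellBoundary π c m (Finsupp.single (g : G ⧸ Subgroup.zpowers (π c)) 1) =
      path (cayleyStep π) ℤ g (c ^ m) := by
  rw [cellBoundary, Finsupp.linearCombination_single, one_smul]
  obtain ⟨⟨_, j, rfl⟩, hj⟩ := QuotientGroup.mk_out_eq_mul (Subgroup.zpowers (π c)) g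
  have h1 := path_mul (cayleyStep π) ℤ g (c ^ j) (c ^ m)
  have h2 := path_mul (cayleyStep π) ℤ g (c ^ m) (c ^ j)
  rw [((Commute.refl c).zpow_left j |>.pow_right m).eq] at h1
  rw [h1, walk_cayleyStep, walk_cayleyStep, _root_.map_pow, hc, mul_one, add_comm] at h2
  rw [hj]
  simpa using h2

lemma cellBoundary_smul (hc : π c ^ m = 1) (g : G) (q : G ⧸ Subgroup.zpowers (π c)) :
    cellBoundary π c m (Finsupp.single (g • q) 1) =
      ofPerm (edgePerm α G) g (cellBoundary π c m (Finsupp.single q 1)) := by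
  induction q using QuotientGroup.induction_on with
  | H x =>
    rw [MulAction.Quotient.smul_coe, smul_eq_mul, cellBoundary_single hc, cellBoundary_single hc,
      ofPerm_edgePerm_path]

lemma exact_cellBoundary (hπ : Function.Surjective π)
    (hker : π.ker = Subgroup.normalClosure {c ^ m}) :
    Function.Exact (cellBoundary π c m) (edgeBoundary ℤ fun a => cayleyStep π a) := by
  have hc : π c ^ m = 1 := by
    rw [← _root_.map_pow, ← MonoidHom.mem_ker, hker]
    exact Subgroup.subset_normalClosure rfl
  intro y
  constructor
  · intro hy
    have h := mem_span_of_loops_eq_closure (cayleyStep π) ℤ (b := 1) (c := c ^ m) (T := Set.univ)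
      (fun v => by
        obtain ⟨w, rfl⟩ := hπ v
        exact ⟨w, by rw [walk_cayleyStep, one_mul]⟩)
      (by rw [loops_cayleyStep_one, hker, Subgroup.normalClosure_singleton_eq_closure,
        Set.image_univ]) hy
    refine (Submodule.span_le (p := LinearMap.range (cellBoundary π c m))).2 ?_ h
    rintro _ ⟨u, -, rfl⟩
    exact ⟨_, cellBoundary_single hc _⟩
  · rintro ⟨x, rfl⟩
    induction x using Finsupp.induction_linear with
    | zero => simp
    | add x y hx hy => rw [_root_.map_add, _root_.map_add, hx, hy, add_zero]
    | single q t =>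
      induction q using QuotientGroup.induction_on with
      | H x =>
        rw [← mul_one t, ← smul_eq_mul, ← Finsupp.smul_single, map_smul, map_smul,
          cellBoundary_single hc, edgeBoundary_path, walk_cayleyStep, _root_.map_pow, hc]
        simp

end FreeGroup

lemma StackedWord.injective_cellBoundary {α G Λ : Type*} [Group G] [LinearOrder Λ] {L m : ℕ}
    [NeZero L] (W : StackedWord α L Λ) (hm : m ≠ 0) {π : FreeGroup α →* G}
    (hπ : Function.Surjective π)
    (hker : π.ker = Subgroup.normalClosure {subword W.letter 0 L ^ m}) :
    Function.Injective (cellBoundary π (subword W.letter 0 L) m) := by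
  rw [injective_iff_map_eq_zero]
  intro x hx
  have hz := W.eq_zero_of_sum_cayley_path_eq_zero hm π hπ hker x.support
    (fun q => Function.surjInv hπ q.out) (fun i _ k _ s h => by
      rw [_root_.map_mul, Function.surjInv_eq hπ, Function.surjInv_eq hπ, _root_.map_pow] at h
      rw [← QuotientGroup.out_eq' i, ← QuotientGroup.out_eq' k, ← h]
      exact (QuotientGroup.mk_mul_of_mem _ (pow_mem (Subgroup.mem_zpowers _) s)))
    x (by
      rw [cellBoundary, Finsupp.linearCombination_apply] at hx
      simp only [Function.surjInv_eq hπ]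
      exact hx)
  ext q
  by_contra h
  exact h (hz q (Finsupp.mem_support_iff.2 h))

/-- The Euler characteristic of a one-relator group, from a finite quotient in which the root of
the relator has maximal order. -/
theorem StackedWord.eulerCharRel {n m L : ℕ} {G H Λ : Type} [Group G] [Group H] [Finite H]
    [LinearOrder Λ] [NeZero L] (W : StackedWord (Fin n) L Λ) (hm : m ≠ 0)
    {π : FreeGroup (Fin n) →* G} (hπ : Function.Surjective π)
    (hker : π.ker = Subgroup.normalClosure {subword W.letter 0 L ^ m})
    {ψ : G →* H} (hψ : Function.Surjective ψ) (hord : orderOf (ψ (π (subword W.letter 0 L))) = m) :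
    EulerCharRel G (1 - (n : ℚ) + 1 / (m : ℚ)) := by
  set c := subword W.letter 0 L
  set C := Subgroup.zpowers (π c)
  have hc : π c ^ m = 1 := by
    rw [← _root_.map_pow, ← MonoidHom.mem_ker, hker]
    exact Subgroup.subset_normalClosure rfl
  let D := Subgroup.zpowers (ψ (π c))
  have hcard : Nat.card H = Nat.card (H ⧸ D) * m := by
    rw [← hord, ← Nat.card_zpowers]
    exact Subgroup.card_eq_card_quotient_mul_card_subgroup D
  have hindex : ψ.ker.index = Nat.card H := by
    rw [Subgroup.index_ker, MonoidHom.range_eq_top.2 hψ, Subgroup.card_top]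
  have hCD : ∀ x y : G, QuotientGroup.leftRel C x y → QuotientGroup.leftRel D (ψ x) (ψ y) := by
    intro x y h
    rw [QuotientGroup.leftRel_apply] at h ⊢
    obtain ⟨j, hj⟩ := h
    exact ⟨j, by simpa using congrArg ψ hj⟩
  let p : G ⧸ C → H ⧸ D := Quotient.map ψ hCD
  have hp : Function.Surjective p := by
    intro q
    induction q using QuotientGroup.induction_on with
    | H y =>
      obtain ⟨x, rfl⟩ := hψ y
      exact ⟨(x : G ⧸ C), rfl⟩
  have hp1 : Function.Surjective (Prod.map ψ (id : Fin n → Fin n)) :=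
    hψ.prodMap Function.surjective_id
  have hres := HasFreeResOfRanks.of_permModules
    ((MulAction.toPermHom G G).comp ψ.ker.subtype) ((edgePerm (Fin n) G).comp ψ.ker.subtype)
    ((MulAction.toPermHom G (G ⧸ C)).comp ψ.ker.subtype)
    (Function.surjInv hψ) (Function.surjInv hp1) (Function.surjInv hp)
    (bijective_perm_surjInv _ hψ ?_ ?_ ?_) (bijective_perm_surjInv _ hp1 ?_ ?_ ?_)
    (bijective_perm_surjInv _ hp ?_ ?_ ?_)
    (edgeBoundary ℤ fun a => cayleyStep π a) (cellBoundary π c m) ?_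
    (fun k q => cellBoundary_smul hc k q) (exact_edgeBoundary hπ) (exact_cellBoundary hπ hker)
    (W.injective_cellBoundary hm hπ hker)
  · refine ⟨ψ.ker, 2, _, ?_, hres, ?_⟩
    · rw [hindex]
      exact Nat.card_pos.ne'
    · have hq : (Nat.card (H ⧸ D) : ℚ) ≠ 0 := Nat.cast_ne_zero.2 Nat.card_pos.ne'
      have hm' : (m : ℚ) ≠ 0 := Nat.cast_ne_zero.2 hm
      simp only [Finset.sum_range_succ, Finset.sum_range_zero, hindex, Nat.card_prod, Nat.card_fin]
      rw [hcard]
      push_cast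
      field_simp
      ring
  · rintro ⟨k, hk⟩ x
    simpa using hk
  · intro x y h
    exact ⟨⟨y * x⁻¹, by simp [MonoidHom.mem_ker, h]⟩, by simp⟩
  · rintro ⟨k, hk⟩ x h
    ext
    simpa using h
  · rintro ⟨k, hk⟩ x
    rw [MonoidHom.mem_ker] at hk
    ext <;> simp [hk]
  · rintro ⟨x, i⟩ ⟨y, j⟩ h
    obtain ⟨hxy, rfl⟩ : ψ x = ψ y ∧ i = j := Prod.mk.inj h
    exact ⟨⟨y * x⁻¹, by simp [MonoidHom.mem_ker, hxy]⟩, by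
      change (y * x⁻¹ * x, i) = (y, i)
      rw [inv_mul_cancel_right]⟩
  · rintro ⟨k, hk⟩ x h
    ext
    simpa using congrArg Prod.fst h
  · rintro ⟨k, hk⟩ q
    rw [MonoidHom.mem_ker] at hk
    induction q using QuotientGroup.induction_on with
    | H x =>
      change ((ψ (k * x) : H) : H ⧸ D) = (ψ x : H)
      rw [_root_.map_mul, hk, one_mul]
  · intro x y h
    induction x using QuotientGroup.induction_on with
    | H x =>
    induction y using QuotientGroup.induction_on with
    | H y =>
      obtain ⟨j, hj⟩ := QuotientGroup.eq.1 (show ((ψ x : H) : H ⧸ D) = (ψ y : H) from h)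
      have hj : ψ (π c) ^ j = (ψ x)⁻¹ * ψ y := hj
      refine ⟨⟨y * (x * π c ^ j)⁻¹, ?_⟩, ?_⟩
      · rw [MonoidHom.mem_ker, _root_.map_mul, _root_.map_inv, _root_.map_mul, map_zpow, hj]
        simp
      · change ((y * (x * π c ^ j)⁻¹ * x : G) : G ⧸ C) = (y : G)
        rw [QuotientGroup.eq]
        exact ⟨j, by simp [mul_assoc]⟩
  · rintro ⟨k, hk⟩ q h
    rw [MonoidHom.mem_ker] at hk
    induction q using QuotientGroup.induction_on with
    | H x =>
      obtain ⟨j, hj⟩ := QuotientGroup.eq.1 (show ((x : G) : G ⧸ C) = (k * x : G) from h.symm)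
      have hj : π c ^ j = x⁻¹ * (k * x) := hj
      have h1 : ψ (π c) ^ j = 1 := by
        rw [← map_zpow, hj]
        simp [hk]
      have h2 : π c ^ j = 1 := by
        obtain ⟨i, rfl⟩ := (hord ▸ orderOf_dvd_iff_zpow_eq_one.2 h1 : (m : ℤ) ∣ j)
        rw [zpow_mul, zpow_natCast, hc, one_zpow]
      ext
      rw [h2] at hj
      simpa using inv_mul_eq_one.1 hj.symm
  · rintro k ⟨x, i⟩
    rw [edgeBoundary_cayleyStep_single, edgeBoundary_cayleyStep_single]
    simp [mul_assoc]

lemma Subgroup.normalClosure_singleton_conj {G : Type*} [Group G] (g x : G) :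
    normalClosure {g * x * g⁻¹} = normalClosure {x} := by
  refine le_antisymm (normalClosure_le_normal ?_) (normalClosure_le_normal ?_)
  · rintro _ rfl
    exact normalClosure_normal.conj_mem x (subset_normalClosure (Set.mem_singleton x)) g
  · rintro y rfl
    have := normalClosure_normal.conj_mem _
      (subset_normalClosure (Set.mem_singleton (g * y * g⁻¹))) g⁻¹
    simpa [mul_assoc] using this

theorem FreeGroup.eulerCharRel_presentedGroup {n m : ℕ} (hm : m ≠ 0) {r : FreeGroup (Fin n)}
    (hr : ¬ ∃ (s : FreeGroup (Fin n)) (k : ℕ), 2 ≤ k ∧ r = s ^ k) :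
    EulerCharRel (PresentedGroup ({r ^ m} : Set (FreeGroup (Fin n))))
      (1 - (n : ℚ) + 1 / (m : ℚ)) := by
  obtain ⟨L, _, _, W, g, hg⟩ := StackedWord.exists_conj_subword r hr
  set c := StackedWord.subword W.letter 0 L with hcdef
  have hc1 : c ≠ 1 := by
    intro h
    exact hr ⟨1, 2, le_rfl, by rw [hg, h]; simp⟩
  obtain ⟨H, _, _, φ, hφ⟩ := FreeGroup.exists_finite_orderOf_eq hc1 hm
  have hrc : r ^ m = g * c ^ m * g⁻¹ := by rw [hg, conj_pow]
  have hker : (PresentedGroup.mk ({r ^ m} : Set (FreeGroup (Fin n)))).ker =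
      Subgroup.normalClosure {c ^ m} := by
    refine (QuotientGroup.ker_mk' (Subgroup.normalClosure {r ^ m})).trans ?_
    rw [hrc, Subgroup.normalClosure_singleton_conj]
  have hφr : Subgroup.normalClosure {r ^ m} ≤ φ.ker := by
    refine Subgroup.normalClosure_le_normal ?_
    rintro _ rfl
    rw [SetLike.mem_coe, MonoidHom.mem_ker, hrc, ← hφ]
    simp [pow_orderOf_eq_one]
  let ψ : PresentedGroup ({r ^ m} : Set (FreeGroup (Fin n))) →* H := QuotientGroup.lift _ φ hφr
  refine W.eulerCharRel hm (PresentedGroup.mk_surjective _) hker (ψ := ψ.rangeRestrict)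
    ψ.rangeRestrict_surjective ?_
  rw [← Subgroup.orderOf_coe]
  exact hφ

end

/-- A one-relator group `G = ⟨g₁, …, g_n ∣ r^m⟩` with `n ≥ 1`, `m ≥ 1` and `r` not a
proper power has Euler characteristic `χ(G) = 1 − n + 1/m`.  Consequently, if `n ≥ 2`
then `χ(G) ≤ 0`, with `χ(G) = 0` if and only if `n = 2` and `m = 1`. -/
theorem eulerChar_oneRelator (n m : ℕ) (hn : 1 ≤ n) (hm : 1 ≤ m)
    (r : FreeGroup (Fin n))
    (hr : ¬ ∃ (s : FreeGroup (Fin n)) (k : ℕ), 2 ≤ k ∧ r = s ^ k) :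
    EulerCharRel (PresentedGroup ({r ^ m} : Set (FreeGroup (Fin n))))
      (1 - (n : ℚ) + 1 / (m : ℚ)) ∧
    (2 ≤ n → (1 - (n : ℚ) + 1 / (m : ℚ) ≤ 0 ∧
      ((1 - (n : ℚ) + 1 / (m : ℚ) = 0) ↔ n = 2 ∧ m = 1))) := by
  refine ⟨FreeGroup.eulerCharRel_presentedGroup (Nat.one_le_iff_ne_zero.1 hm) hr, fun h2 => ?_⟩
  have hn2 : (2 : ℚ) ≤ n := by exact_mod_cast h2
  have hm1 : (1 : ℚ) ≤ m := by exact_mod_cast hm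
  have hdiv : 1 / (m : ℚ) ≤ 1 := (div_le_one (by linarith)).2 hm1
  refine ⟨by linarith, fun h => ?_, ?_⟩
  · have hn' : (n : ℚ) = 2 := by linarith
    have hm' : 1 / (m : ℚ) = 1 := by linarith
    rw [one_div, inv_eq_one] at hm'
    exact ⟨by exact_mod_cast hn', by exact_mod_cast hm'⟩
  · rintro ⟨rfl, rfl⟩
    norm_num
end

section
/- Let R be a PID and C_•, D_• chain complexes of free R-modules. Then for each k there is a split short exact sequence 0 → ⊕_{i+j=k} H_i(C_•) ⊗_R H_j(D_•) → H_k(C_• ⊗ D_•) → ⊕_{i+j=k−1} Tor₁^R(H_i(C_•), H_j(D_•)) → 0. -/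
open CategoryTheory DirectSum

open scoped TensorProduct

universe u v

/-- A submodule of a free module over a principal ideal domain, presented in coordinates, is free:
a basis is obtained by choosing elements with minimal leading coefficients for a well-ordering of
the coordinates. -/
theorem Submodule.free_of_finsupp {R ι : Type*} [CommRing R] [IsDomain R] [IsPrincipalIdealRing R]
    (N : Submodule R (ι →₀ R)) : Module.Free R N := by
  obtain ⟨_, _⟩ := exists_wellFoundedLT ι
  let I : ι → Ideal R := fun i =>
    (N ⊓ Finsupp.supported R R (Set.Iic i)).map (Finsupp.lapply i)
  let a : ι → R := fun i => Submodule.IsPrincipal.generator (I i)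
  have ha : ∀ i, a i ∈ I i := fun i => Submodule.IsPrincipal.generator_mem _
  choose n hn hna using fun i => Submodule.mem_map.1 (ha i)
  have hna' : ∀ i, n i i = a i := hna
  have hlt : ∀ i j, i < j → n i j = 0 := fun i j h => by
    by_contra hne
    exact not_le.2 h ((Finsupp.mem_supported R (n i)).1 (hn i).2 (Finsupp.mem_support_iff.2 hne))
  let v : {i // a i ≠ 0} → N := fun i => ⟨n i, (hn i).1⟩
  have hli : LinearIndependent R v := by
    refine (injective_iff_map_eq_zero (Finsupp.linearCombination R v)).2 fun l hl => ?_
    by_contra hne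
    have hs : l.support.Nonempty := Finsupp.support_nonempty_iff.2 hne
    have hm := Finset.max'_mem _ hs
    have h1 : ((Finsupp.linearCombination R v l : N) : ι →₀ R) (l.support.max' hs) =
        l (l.support.max' hs) * a (l.support.max' hs) := by
      rw [Finsupp.linearCombination_apply, Finsupp.sum, AddSubmonoidClass.coe_finsetSum,
        Finsupp.finsetSum_apply, Finset.sum_eq_single_of_mem _ hm]
      · simp [v, hna']
      · intro j hj hjm
        have := lt_of_le_of_ne (Finset.le_max' _ j hj) hjm
        simp [v, hlt j (l.support.max' hs) this]
    rw [hl] at h1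
    have h2 : l (l.support.max' hs) * a (l.support.max' hs) = 0 := h1.symm
    exact (mul_ne_zero (Finsupp.mem_support_iff.1 hm) (l.support.max' hs).2) h2
  have hspan : ∀ i, ∀ x : N, (∀ j, i < j → (x : ι →₀ R) j = 0) → x ∈ span R (Set.range v) := by
    intro i
    induction i using WellFoundedLT.induction with
    | ind i ih =>
      intro x hx
      have hxI : (x : ι →₀ R) i ∈ I i := by
        refine Submodule.mem_map.2 ⟨x, ⟨x.2, (Finsupp.mem_supported R _).2 fun j hj => ?_⟩, rfl⟩
        exact le_of_not_gt fun h => Finsupp.mem_support_iff.1 hj (hx j h)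
      obtain ⟨c, hc⟩ := (Submodule.IsPrincipal.mem_iff_eq_smul_generator _).1 hxI
      have hsub : ∀ y : N, (∀ j, i ≤ j → (y : ι →₀ R) j = 0) → y ∈ span R (Set.range v) := by
        intro y hy
        by_cases hy0 : y = 0
        · rw [hy0]; exact zero_mem _
        have hs : (y : ι →₀ R).support.Nonempty :=
          Finsupp.support_nonempty_iff.2 fun h => hy0 (Subtype.ext h)
        refine ih (Finset.max' _ hs) ?_ y fun j hj => ?_
        · by_contra h
          exact Finsupp.mem_support_iff.1 (Finset.max'_mem _ hs) (hy _ (not_lt.1 h))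
        · by_contra h
          exact not_le.2 hj (Finset.le_max' _ _ (Finsupp.mem_support_iff.2 h))
      by_cases hai : a i = 0
      · refine hsub x fun j hj => ?_
        rcases hj.eq_or_lt with rfl | hj
        · rw [hc]
          exact mul_eq_zero_of_right _ hai
        · exact hx j hj
      · have h := hsub (x - c • v ⟨i, hai⟩) fun j hj => by
          rcases hj.eq_or_lt with rfl | hj
          · simp only [v, Submodule.coe_sub, Submodule.coe_smul, Finsupp.sub_apply,
              Finsupp.smul_apply, hna', hc]
            exact sub_self _
          · simp [v, hx j hj, hlt i j hj]
        rw [← sub_add_cancel x (c • v ⟨i, hai⟩)]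
        exact add_mem h (Submodule.smul_mem _ _ (subset_span ⟨_, rfl⟩))
  refine Module.Free.of_basis (Module.Basis.mk hli ?_)
  intro x _
  by_cases hx : x = 0
  · rw [hx]; exact zero_mem _
  have hs : (x : ι →₀ R).support.Nonempty :=
    Finsupp.support_nonempty_iff.2 fun h => hx (Subtype.ext h)
  refine hspan (Finset.max' _ hs) x fun j hj => ?_
  by_contra h
  exact not_le.2 hj (Finset.le_max' _ _ (Finsupp.mem_support_iff.2 h))

/-- A submodule of a free module over a principal ideal domain is free. -/
theorem Submodule.free_of_isPrincipalIdealRing {R M : Type*} [CommRing R] [IsDomain R]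
    [IsPrincipalIdealRing R] [AddCommGroup M] [Module R M] [Module.Free R M]
    (N : Submodule R M) : Module.Free R N := by
  let e := (Module.Free.chooseBasis R M).repr
  have := Submodule.free_of_finsupp (N.map e.toLinearMap)
  exact Module.Free.of_equiv (e.submoduleMap N).symm

/-- The homology of a short complex of modules is the quotient of the cycles by the boundaries. -/
theorem ShortComplex.exists_ker_to_homology {R : Type u} [Ring R]
    (S : ShortComplex (ModuleCat.{v} R)) :
    ∃ p : LinearMap.ker S.g.hom →ₗ[R] S.homology, Function.Surjective p ∧
      ∀ z, p z = 0 ↔ ∃ w, S.f.hom w = z := by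
  let e : (LinearMap.ker S.g.hom ⧸ LinearMap.range S.moduleCatToCycles) ≃ₗ[R] S.homology :=
    S.moduleCatHomologyIso.symm.toLinearEquiv
  refine ⟨e.toLinearMap ∘ₗ (LinearMap.range S.moduleCatToCycles).mkQ, ?_, ?_⟩
  · exact e.surjective.comp (Submodule.mkQ_surjective _)
  · intro z
    refine (LinearEquiv.map_eq_zero_iff e).trans ?_
    refine (Submodule.Quotient.mk_eq_zero _).trans ?_
    exact exists_congr fun w => Subtype.ext_iff

/-- The homology of a complex of modules is the quotient of the cycles by the boundaries. -/
theorem HomologicalComplex.exists_ker_to_homology {R : Type u} {ι : Type*} [Ring R]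
    {c : ComplexShape ι} (K : HomologicalComplex (ModuleCat.{v} R) c) {i j k : ι}
    (hij : c.Rel i j) (hjk : c.Rel j k) :
    ∃ p : LinearMap.ker (K.d j k).hom →ₗ[R] K.homology j, Function.Surjective p ∧
      ∀ z, p z = 0 ↔ ∃ w, (K.d i j).hom w = z := by
  obtain ⟨p, hp, hp'⟩ := ShortComplex.exists_ker_to_homology (K.sc' i j k)
  let e : (K.sc' i j k).homology ≃ₗ[R] K.homology j := (ShortComplex.homologyMapIso
    (K.isoSc' i j k (c.prev_eq' hij) (c.next_eq' hjk))).symm.toLinearEquiv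
  exact ⟨e.toLinearMap ∘ₗ p, e.surjective.comp hp,
    fun z => (LinearEquiv.map_eq_zero_iff e).trans (hp' z)⟩

/-- A two-term free resolution is a projective resolution. -/
theorem ModuleCat.exists_projectiveResolution_of_shortExact {R : Type u} [Ring R]
    {B Z H : ModuleCat.{u} R} (hB : Module.Free R B) (hZ : Module.Free R Z)
    (e : B ⟶ Z) (q : Z ⟶ H) (he : Function.Injective e.hom)
    (hq : Function.Surjective q.hom) (hex : Function.Exact e.hom q.hom) :
    ∃ (P : ProjectiveResolution H) (w : _),
      P.complex = ((ChainComplex.single₀ _).obj B).augment e w := by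
  have w : ((ChainComplex.single₀ (ModuleCat R)).obj B).d 1 0 ≫ e = 0 := by
    exact Limits.zero_comp
  have hw : e ≫ q = 0 := by ext x; exact hex.apply_apply_eq_zero x
  let K := ((ChainComplex.single₀ (ModuleCat R)).obj B).augment e w
  have hz : ∀ n, Limits.IsZero (K.X (n + 2)) := fun n =>
    HomologicalComplex.isZero_single_obj_X (ComplexShape.down ℕ) 0 B (n + 1) (by simp)
  let π : K ⟶ (ChainComplex.single₀ _).obj H := (K.toSingle₀Equiv H).symm ⟨q, hw⟩
  have hB' : Projective B := ModuleCat.projective_of_free (Module.Free.chooseBasis R B)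
  have hZ' : Projective Z := ModuleCat.projective_of_free (Module.Free.chooseBasis R Z)
  refine ⟨{ complex := K, π := π, projective := ?_, quasiIso := ⟨fun m => ?_⟩ }, w, rfl⟩
  · rintro (_ | _ | n)
    · exact hZ'
    · exact hB'
    · exact (hz n).projective
  · rcases m with _ | _ | n
    · rw [ChainComplex.quasiIsoAt₀_iff, ShortComplex.quasiIso_iff_of_zeros' _ rfl rfl rfl]
      constructor
      · rw [ShortComplex.ShortExact.moduleCat_exact_iff_function_exact]
        have : π.f 0 = q := K.toSingle₀Equiv_symm_apply_f_zero q hw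
        change Function.Exact e.hom (π.f 0).hom
        rwa [this]
      · rw [ModuleCat.epi_iff_surjective]
        have : π.f 0 = q := K.toSingle₀Equiv_symm_apply_f_zero q hw
        change Function.Surjective (π.f 0).hom
        rwa [this]
    · rw [quasiIsoAt_iff_exactAt' (hL := ChainComplex.exactAt_succ_single_obj ..),
          HomologicalComplex.exactAt_iff' _ 2 1 0 (by simp) (by simp),
          ShortComplex.exact_iff_mono _ ((hz 0).eq_of_src _ _), ModuleCat.mono_iff_injective]
      exact he
    · rw [quasiIsoAt_iff_exactAt' (hL := ChainComplex.exactAt_succ_single_obj ..),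
          HomologicalComplex.exactAt_iff' _ (n+3) (n+2) (n+1) (by simp) (by simp)]
      exact ShortComplex.exact_of_isZero_X₂ _ (hz n)

/-- `Tor₁(X, H)` is the kernel of `X ⊗ B → X ⊗ Z` for a free resolution `0 → B → Z → H → 0`. -/
theorem ModuleCat.exists_tor_one_equiv_ker {R : Type u} [CommRing R] (X : ModuleCat.{u} R)
    {B Z H : ModuleCat.{u} R} (hB : Module.Free R B) (hZ : Module.Free R Z)
    (e : B →ₗ[R] Z) (q : Z →ₗ[R] H) (he : Function.Injective e)
    (hq : Function.Surjective q) (hex : Function.Exact e q) :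
    Nonempty (LinearMap.ker (e.lTensor X) ≃ₗ[R] ((Tor (ModuleCat R) 1).obj X).obj H) := by
  obtain ⟨P, w, hP⟩ := ModuleCat.exists_projectiveResolution_of_shortExact hB hZ
    (ModuleCat.ofHom e) (ModuleCat.ofHom q) he hq hex
  let F := (MonoidalCategory.tensoringLeft (ModuleCat R)).obj X
  let i := P.isoLeftDerivedObj F 1
  rw [hP] at i
  let K := (F.mapHomologicalComplex (ComplexShape.down ℕ)).obj
    (((ChainComplex.single₀ _).obj B).augment (ModuleCat.ofHom e) w)
  have hz : Limits.IsZero (K.X 2) := F.map_isZero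
    (HomologicalComplex.isZero_single_obj_X (ComplexShape.down ℕ) 0 B 1 (by simp))
  obtain ⟨p, hp, hp'⟩ := K.exists_ker_to_homology (i := 2) (j := 1) (k := 0) (by simp) (by simp)
  have hinj : Function.Injective p := by
    rw [injective_iff_map_eq_zero]
    intro z hz'
    obtain ⟨u, hu⟩ := (hp' z).1 hz'
    have : (K.d 2 1).hom u = 0 := by rw [hz.eq_of_src (K.d 2 1) 0]; rfl
    exact Subtype.ext (hu.symm.trans this)
  exact ⟨(LinearEquiv.ofBijective p ⟨hinj, hp⟩).trans i.symm.toLinearEquiv⟩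

/-- A linear map with free range admits a retraction onto its kernel. -/
theorem LinearMap.exists_retraction_ker {R M N : Type*} [CommRing R] [AddCommGroup M] [Module R M]
    [AddCommGroup N] [Module R N] (f : M →ₗ[R] N) [Module.Free R (LinearMap.range f)] :
    ∃ r : M →ₗ[R] LinearMap.ker f, ∀ x : LinearMap.ker f, r x = x := by
  obtain ⟨s, hs⟩ := Module.projective_lifting_property f.rangeRestrict LinearMap.id
    f.surjective_rangeRestrict
  have hs' : ∀ x, f (s (f.rangeRestrict x)) = f x := fun x =>
    congrArg Subtype.val (LinearMap.congr_fun hs (f.rangeRestrict x))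
  refine ⟨(LinearMap.id - s ∘ₗ f.rangeRestrict).codRestrict _ fun x => by simp [hs'],
    fun x => ?_⟩
  · apply Subtype.ext
    have : f.rangeRestrict x = 0 := Subtype.ext x.2
    simp [this]

section FreeComplex

variable {R : Type u} [CommRing R] [IsDomain R] [IsPrincipalIdealRing R]
  (C : ChainComplex (ModuleCat.{u} R) ℤ)

/-- The projection of the cycles of a complex of free modules onto homology extends to chains. -/
theorem ChainComplex.exists_homology_projection (hC : ∀ i, Module.Free R (C.X i)) {i j k : ℤ}
    (hij : j + 1 = i) (hjk : k + 1 = j) :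
    ∃ π : C.X j →ₗ[R] C.homology j,
      (∀ x, (C.d j k).hom x = 0 ∧ π x = 0 ↔ ∃ w, (C.d i j).hom w = x) ∧
      ∀ h, ∃ z, (C.d j k).hom z = 0 ∧ π z = h := by
  obtain ⟨p, hp, hp'⟩ := C.exists_ker_to_homology (i := i) (j := j) (k := k) hij hjk
  have := hC k
  have := Submodule.free_of_isPrincipalIdealRing (LinearMap.range (C.d j k).hom)
  obtain ⟨r, hr⟩ := (C.d j k).hom.exists_retraction_ker
  refine ⟨p ∘ₗ r, fun x => ⟨?_, ?_⟩, fun h => ?_⟩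
  · rintro ⟨h1, h2⟩
    rw [LinearMap.comp_apply, hr ⟨x, h1⟩] at h2
    exact (hp' _).1 h2
  · rintro ⟨w, rfl⟩
    have h1 : (C.d j k).hom ((C.d i j).hom w) = 0 := congr($(C.d_comp_d i j k).hom w)
    refine ⟨h1, ?_⟩
    rw [LinearMap.comp_apply, hr ⟨_, h1⟩]
    exact (hp' _).2 ⟨w, rfl⟩
  · obtain ⟨z, rfl⟩ := hp h
    exact ⟨z, z.2, by rw [LinearMap.comp_apply, hr]⟩

/-- The universal coefficient theorem: the homology of `X ⊗ C` is the direct sum of `X ⊗ H(C)` and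
a torsion product. -/
theorem ChainComplex.exists_ker_lTensor_to_prod (hC : ∀ i, Module.Free R (C.X i))
    (X : ModuleCat.{u} R) {i j k : ℤ} (hij : j + 1 = i) (hjk : k + 1 = j) :
    ∃ Θ : LinearMap.ker ((C.d j k).hom.lTensor X) →ₗ[R]
        (X ⊗[R] C.homology j) × (((Tor (ModuleCat R) 1).obj X).obj (C.homology k)),
      Function.Surjective Θ ∧ ∀ z, Θ z = 0 ↔ ∃ w, (C.d i j).hom.lTensor X w = z := by
  obtain ⟨π, hπ, hπ'⟩ := C.exists_homology_projection hC hij hjk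
  obtain ⟨q, hq, hq'⟩ := C.exists_ker_to_homology (i := j) (j := k) (k := k - 1) hjk (by simp)
  have := hC k
  have := hC (k - 1)
  let f := (C.d j k).hom
  let g := (C.d k (k - 1)).hom
  let e : LinearMap.range f →ₗ[R] LinearMap.ker g := Submodule.inclusion (by
    rintro _ ⟨w, rfl⟩
    exact congr($(C.d_comp_d j k (k - 1)).hom w))
  have := Submodule.free_of_isPrincipalIdealRing (LinearMap.range f)
  have := Submodule.free_of_isPrincipalIdealRing (LinearMap.range g)
  have := Submodule.free_of_isPrincipalIdealRing (LinearMap.ker g)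
  obtain ⟨r, hr⟩ := g.exists_retraction_ker
  obtain ⟨τ⟩ := ModuleCat.exists_tor_one_equiv_ker X
    (B := ModuleCat.of R (LinearMap.range f)) (Z := ModuleCat.of R (LinearMap.ker g))
    (inferInstanceAs (Module.Free R (LinearMap.range f)))
    (inferInstanceAs (Module.Free R (LinearMap.ker g))) e q
    (Submodule.inclusion_injective _) hq (fun z => (hq' z).trans
      ⟨fun ⟨w, hw⟩ => ⟨⟨_, w, rfl⟩, Subtype.ext hw⟩, fun ⟨⟨_, w, hw⟩, h⟩ => ⟨w, by
        rw [← h]; exact hw⟩⟩)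
  have hr' : r ∘ₗ (LinearMap.ker g).subtype = LinearMap.id := LinearMap.ext hr
  have hker : ∀ y, (e.lTensor X) y = 0 ↔
      (((LinearMap.ker g).subtype ∘ₗ e).lTensor X) y = 0 := by
    intro y
    rw [LinearMap.lTensor_comp, LinearMap.comp_apply]
    refine ⟨fun h => by rw [h, map_zero], fun h => ?_⟩
    have := congrArg (r.lTensor X) h
    rwa [← LinearMap.comp_apply, ← LinearMap.lTensor_comp, hr', LinearMap.lTensor_id, map_zero]
      at this
  have hfy : ∀ y, (f.lTensor X) y = 0 ↔ (e.lTensor X) (f.rangeRestrict.lTensor X y) = 0 := by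
    intro y
    rw [hker, ← LinearMap.comp_apply, ← LinearMap.lTensor_comp]
    rfl
  let γ : LinearMap.ker (f.lTensor X) →ₗ[R] LinearMap.ker (e.lTensor X) :=
    (f.rangeRestrict.lTensor X).restrict fun y hy => (hfy y).1 hy
  let δ : C.X j →ₗ[R] C.homology j × LinearMap.range f := π.prod f.rangeRestrict
  have hδ : Function.Surjective δ := by
    rintro ⟨h, ⟨_, w, rfl⟩⟩
    obtain ⟨z, hz, hz'⟩ := hπ' (h - π w)
    refine ⟨z + w, Prod.ext ?_ (Subtype.ext ?_)⟩
    · simp [δ, hz']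
    · change f (z + w) = f w
      rw [map_add]
      exact (congrArg (· + f w) hz).trans (zero_add _)
  have hex : Function.Exact (C.d i j).hom δ := by
    intro x
    refine Iff.trans ?_ (hπ x)
    rw [and_comm]
    exact Prod.ext_iff.trans (and_congr Iff.rfl Subtype.ext_iff)
  have hexX := lTensor_exact X hex hδ
  have hδX := LinearMap.lTensor_surjective X hδ
  let ε := TensorProduct.prodRight R R X (C.homology j) (LinearMap.range f)
  have hε : ∀ y, ε (δ.lTensor X y) = (π.lTensor X y, f.rangeRestrict.lTensor X y) := by
    intro y
    induction y using TensorProduct.induction_on with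
    | zero => simp only [map_zero, Prod.mk_zero_zero]
    | tmul a b => simp [ε, δ]
    | add a b ha hb => simp only [map_add, ha, hb, Prod.mk_add_mk]
  refine ⟨(π.lTensor X ∘ₗ Submodule.subtype _).prod (τ.toLinearMap ∘ₗ γ), ?_, ?_⟩
  · rintro ⟨a, t⟩
    obtain ⟨⟨b, hb⟩, rfl⟩ := τ.surjective t
    obtain ⟨y, hy⟩ := hδX (ε.symm (a, b))
    have h := hε y
    rw [hy, ε.apply_symm_apply, Prod.ext_iff] at h
    obtain ⟨rfl, rfl⟩ := h
    exact ⟨⟨y, (hfy y).2 hb⟩, rfl⟩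
  · rintro ⟨y, hy⟩
    refine Iff.trans ?_ (hexX y)
    rw [← ε.map_eq_zero_iff, hε]
    rw [Prod.ext_iff, Prod.ext_iff]
    exact and_congr Iff.rfl ((τ.map_eq_zero_iff).trans Subtype.ext_iff)

end FreeComplex

section Total

variable {R : Type*} [CommRing R] {A A' E : ℤ → Type*}
  [∀ i, AddCommGroup (A i)] [∀ i, Module R (A i)]
  [∀ i, AddCommGroup (A' i)] [∀ i, Module R (A' i)]
  [∀ i, AddCommGroup (E i)] [∀ i, Module R (E i)]

variable (R A E) in
/-- The degree `n` part of the tensor product of two graded modules. -/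
abbrev TotalTensor (n : ℤ) : Type _ := ⨁ i : ℤ, A i ⊗[R] E (n - i)

namespace TotalTensor

variable (R A E) in
/-- The inclusion of the summand of bidegree `(i, j)`. -/
def incl (i j n : ℤ) (h : i + j = n) : A i ⊗[R] E j →ₗ[R] TotalTensor R A E n := by
  obtain rfl : j = n - i := by omega
  exact DirectSum.lof R ℤ (fun i => A i ⊗[R] E (n - i)) i

theorem incl_sub (i n : ℤ) (h : i + (n - i) = n) :
    incl R A E i (n - i) n h = DirectSum.lof R ℤ (fun i => A i ⊗[R] E (n - i)) i := rfl

theorem hom_ext {M : Type*} [AddCommGroup M] [Module R M] {n : ℤ}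
    {f g : TotalTensor R A E n →ₗ[R] M}
    (H : ∀ i j h x y, f (incl R A E i j n h (x ⊗ₜ y)) = g (incl R A E i j n h (x ⊗ₜ y))) :
    f = g := by
  refine DirectSum.linearMap_ext R fun i => TensorProduct.ext' fun x y => ?_
  exact H i (n - i) (by omega) x y

variable (dA : ∀ i j, A i →ₗ[R] A j) (dA' : ∀ i j, A' i →ₗ[R] A' j) (dE : ∀ i j, E i →ₗ[R] E j)

/-- The differential of the tensor product of two complexes. -/
def d (n m : ℤ) (h : m + 1 = n) : TotalTensor R A E n →ₗ[R] TotalTensor R A E m :=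
  DirectSum.toModule R ℤ _ fun i =>
    incl R A E (i - 1) (n - i) m (by omega) ∘ₗ (dA i (i - 1)).rTensor (E (n - i)) +
    ((Int.negOnePow i : ℤˣ) : ℤ) •
      (incl R A E i (n - i - 1) m (by omega) ∘ₗ (dE (n - i) (n - i - 1)).lTensor (A i))

theorem d_incl {i j n m i' j' : ℤ} (h : m + 1 = n) (hij : i + j = n) (hi : i' + 1 = i)
    (hj : j' + 1 = j) (x : A i) (y : E j) :
    d dA dE n m h (incl R A E i j n hij (x ⊗ₜ y)) =
      incl R A E i' j m (by omega) (dA i i' x ⊗ₜ y) +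
      ((Int.negOnePow i : ℤˣ) : ℤ) • incl R A E i j' m (by omega) (x ⊗ₜ dE j j' y) := by
  obtain rfl : j = n - i := by omega
  obtain rfl : i' = i - 1 := by omega
  obtain rfl : j' = n - i - 1 := by omega
  rw [incl_sub, d, DirectSum.toModule_lof]
  rfl

/-- The map induced on tensor products by a map of graded modules in the first variable. -/
def map (f : ∀ i, A i →ₗ[R] A' i) (n : ℤ) : TotalTensor R A E n →ₗ[R] TotalTensor R A' E n :=
  DirectSum.lmap fun i => (f i).rTensor (E (n - i))

theorem map_incl (f : ∀ i, A i →ₗ[R] A' i) {i j n : ℤ} (h : i + j = n) (x : A i) (y : E j) :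
    map f n (incl R A E i j n h (x ⊗ₜ y)) = incl R A' E i j n h (f i x ⊗ₜ y) := by
  obtain rfl : j = n - i := by omega
  rw [incl_sub, map, DirectSum.lmap_lof]
  rfl

theorem map_d (f : ∀ i, A i →ₗ[R] A' i)
    (hf : ∀ i j, j + 1 = i → ∀ x, f j (dA i j x) = dA' i j (f i x)) {n m : ℤ} (h : m + 1 = n)
    (t : TotalTensor R A E n) : map f m (d dA dE n m h t) = d dA' dE n m h (map f n t) := by
  suffices H : map f m ∘ₗ d dA dE n m h = d dA' dE n m h ∘ₗ map f n from LinearMap.congr_fun H t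
  refine hom_ext fun i j hij x y => ?_
  simp only [LinearMap.comp_apply, map_incl,
    d_incl dA dE h hij (sub_add_cancel i 1) (sub_add_cancel j 1),
    d_incl dA' dE h hij (sub_add_cancel i 1) (sub_add_cancel j 1), map_add, map_zsmul]
  rw [hf _ _ (sub_add_cancel i 1)]

/-- The map of degree one induced on tensor products by a map of degree one in the first
variable. -/
def homotopy (s : ∀ i j, A i →ₗ[R] A j) (n m : ℤ) (h : n + 1 = m) :
    TotalTensor R A E n →ₗ[R] TotalTensor R A E m :=
  DirectSum.toModule R ℤ _ fun i =>
    incl R A E (i + 1) (n - i) m (by omega) ∘ₗ (s i (i + 1)).rTensor (E (n - i))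

theorem homotopy_incl (s : ∀ i j, A i →ₗ[R] A j) {i j n m i' : ℤ} (h : n + 1 = m)
    (hij : i + j = n) (hi : i + 1 = i') (x : A i) (y : E j) :
    homotopy s n m h (incl R A E i j n hij (x ⊗ₜ y)) =
      incl R A E i' j m (by omega) (s i i' x ⊗ₜ y) := by
  obtain rfl : j = n - i := by omega
  subst hi
  rw [incl_sub, homotopy, DirectSum.toModule_lof]
  rfl

theorem d_homotopy_add_homotopy_d (s : ∀ i j, A i →ₗ[R] A j)
    (hs : ∀ i j k, j + 1 = i → k + 1 = j → ∀ x, dA i j (s j i x) + s k j (dA j k x) = x)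
    {l n m : ℤ} (hl : n + 1 = l) (hm : m + 1 = n) (t : TotalTensor R A E n) :
    d dA dE l n hl (homotopy s n l hl t) + homotopy s m n hm (d dA dE n m hm t) = t := by
  suffices H : d dA dE l n hl ∘ₗ homotopy s n l hl + homotopy s m n hm ∘ₗ d dA dE n m hm =
    LinearMap.id from LinearMap.congr_fun H t
  refine hom_ext fun i j hij x y => ?_
  simp only [LinearMap.add_apply, LinearMap.comp_apply, LinearMap.id_apply,
    homotopy_incl s hl hij rfl, d_incl dA dE hm hij (sub_add_cancel i 1) (sub_add_cancel j 1),
    d_incl dA dE hl (show i + 1 + j = l by omega) rfl (sub_add_cancel j 1), map_add, map_zsmul,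
    homotopy_incl s hm (show i - 1 + j = m by omega) (sub_add_cancel i 1),
    homotopy_incl s hm (show i + (j - 1) = m by omega) rfl]
  rw [Int.negOnePow_succ]
  conv_rhs => rw [← hs (i + 1) i (i - 1) rfl (sub_add_cancel i 1) x, TensorProduct.add_tmul,
    map_add]
  simp only [Units.val_neg, neg_smul]
  abel

theorem d_d (hA : ∀ i j k, j + 1 = i → k + 1 = j → ∀ x, dA j k (dA i j x) = 0)
    (hE : ∀ i j k, j + 1 = i → k + 1 = j → ∀ y, dE j k (dE i j y) = 0) {l n m : ℤ}
    (hl : n + 1 = l) (hm : m + 1 = n) (t : TotalTensor R A E l) :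
    d dA dE n m hm (d dA dE l n hl t) = 0 := by
  suffices H : d dA dE n m hm ∘ₗ d dA dE l n hl = 0 from LinearMap.congr_fun H t
  refine hom_ext fun i j hij x y => ?_
  simp only [LinearMap.comp_apply, LinearMap.zero_apply, map_add, map_zsmul,
    d_incl dA dE hl hij (sub_add_cancel i 1) (sub_add_cancel j 1),
    d_incl dA dE hm (show i - 1 + j = n by omega) (sub_add_cancel (i - 1) 1)
      (sub_add_cancel j 1),
    d_incl dA dE hm (show i + (j - 1) = n by omega) (sub_add_cancel i 1)
      (sub_add_cancel (j - 1) 1)]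
  rw [hA _ _ _ (sub_add_cancel i 1) (sub_add_cancel (i - 1) 1),
    hE _ _ _ (sub_add_cancel j 1) (sub_add_cancel (j - 1) 1), Int.negOnePow_sub, Int.negOnePow_one]
  simp

theorem d_zero_left {n m : ℤ} (h : m + 1 = n) :
    d (fun _ _ => (0 : A _ →ₗ[R] A _)) dE n m h = DirectSum.lmap fun i =>
      ((Int.negOnePow i : ℤˣ) : ℤ) • (dE (n - i) (m - i)).lTensor (A i) := by
  refine DirectSum.linearMap_ext R fun i => TensorProduct.ext' fun x y => ?_
  rw [LinearMap.comp_apply, LinearMap.comp_apply, DirectSum.lmap_lof,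
    ← incl_sub i n (by omega), d_incl _ dE h (by omega) (sub_add_cancel i 1)
      (show m - i + 1 = n - i by omega)]
  simp only [LinearMap.zero_apply, TensorProduct.zero_tmul, map_zero, zero_add,
    LinearMap.smul_apply, LinearMap.lTensor_tmul, map_zsmul]
  rfl

end TotalTensor

end Total

section DirectSumLemmas

variable {R ι : Type*} [CommRing R] {M N : ι → Type*}
  [∀ i, AddCommGroup (M i)] [∀ i, Module R (M i)]
  [∀ i, AddCommGroup (N i)] [∀ i, Module R (N i)]

theorem DirectSum.mem_range_lmap_iff (f : ∀ i, M i →ₗ[R] N i) (t : ⨁ i, N i) :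
    (∃ w, DirectSum.lmap f w = t) ↔ ∀ i, ∃ w, f i w = t i := by
  rw [← LinearMap.mem_range, DirectSum.range_lmap]
  simp [Submodule.mem_pi]

theorem DirectSum.lmap_eq_zero_iff (f : ∀ i, M i →ₗ[R] N i) (t : ⨁ i, M i) :
    DirectSum.lmap f t = 0 ↔ ∀ i, f i (t i) = 0 := by
  rw [← LinearMap.mem_ker, DirectSum.ker_lmap]
  simp [Submodule.mem_pi]

/-- Surjections from kernels to products assemble over direct sums. -/
theorem DirectSum.exists_ker_to_prod {A B : ι → Type*}
    [∀ i, AddCommGroup (A i)] [∀ i, Module R (A i)]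
    [∀ i, AddCommGroup (B i)] [∀ i, Module R (B i)] (f : ∀ i, M i →ₗ[R] N i)
    (Θ : ∀ i, LinearMap.ker (f i) →ₗ[R] A i × B i) (hΘ : ∀ i, Function.Surjective (Θ i)) :
    ∃ Ξ : LinearMap.ker (DirectSum.lmap f) →ₗ[R] (⨁ i, A i) × (⨁ i, B i),
      Function.Surjective Ξ ∧
        ∀ z, Ξ z = 0 ↔ ∀ i, ∃ w, Θ i w = 0 ∧ (w : M i) = (z : ⨁ i, M i) i := by
  let j : (⨁ i, LinearMap.ker (f i)) →ₗ[R] ⨁ i, M i :=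
    DirectSum.lmap fun i => (LinearMap.ker (f i)).subtype
  have hj : Function.Injective j :=
    (DirectSum.lmap_injective _).2 fun i => Submodule.subtype_injective _
  have hjr : LinearMap.range j = LinearMap.ker (DirectSum.lmap f) := by
    ext t
    rw [LinearMap.mem_range, DirectSum.mem_range_lmap_iff, LinearMap.mem_ker,
      DirectSum.lmap_eq_zero_iff]
    exact forall_congr' fun i => ⟨fun ⟨w, hw⟩ => hw ▸ w.2, fun h => ⟨⟨_, h⟩, rfl⟩⟩
  let e := (LinearEquiv.ofInjective j hj).trans (LinearEquiv.ofEq _ _ hjr)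
  have he : ∀ g, (e g : ⨁ i, M i) = j g := fun g => rfl
  let a := DirectSum.lmap fun i => LinearMap.fst R (A i) (B i) ∘ₗ Θ i
  let b := DirectSum.lmap fun i => LinearMap.snd R (A i) (B i) ∘ₗ Θ i
  refine ⟨(a.prod b) ∘ₗ e.symm.toLinearMap, ?_, fun z => ?_⟩
  · rintro ⟨x, y⟩
    obtain ⟨g, hg⟩ := (DirectSum.lmap_surjective Θ).2 hΘ
      (DirectSum.lmap (fun i => LinearMap.inl R (A i) (B i)) x +
        DirectSum.lmap (fun i => LinearMap.inr R (A i) (B i)) y)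
    have hg' : ∀ i, Θ i (g i) = (x i, y i) := fun i => by
      have h : Θ i (g i) = LinearMap.inl R (A i) (B i) (x i) + LinearMap.inr R (A i) (B i) (y i) :=
        DFunLike.congr_fun hg i
      rw [h]
      simp
    refine ⟨e g, ?_⟩
    rw [LinearMap.comp_apply, LinearEquiv.coe_coe, e.symm_apply_apply]
    refine Prod.ext (DFinsupp.ext fun i => ?_) (DFinsupp.ext fun i => ?_)
    · exact congrArg Prod.fst (hg' i)
    · exact congrArg Prod.snd (hg' i)
  · obtain ⟨g, rfl⟩ := e.surjective z
    rw [LinearMap.comp_apply, LinearEquiv.coe_coe, e.symm_apply_apply, he]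
    refine Prod.ext_iff.trans (Iff.trans (and_congr (DirectSum.lmap_eq_zero_iff _ g)
      (DirectSum.lmap_eq_zero_iff _ g)) ?_)
    rw [← forall_and]
    refine forall_congr' fun i => Iff.trans (show _ ↔ Θ i (g i) = 0 from
      (Prod.ext_iff (x := Θ i (g i)) (y := 0)).symm) ⟨fun h => ⟨g i, h, rfl⟩, ?_⟩
    rintro ⟨w, hw, hwg⟩
    rwa [← show w = g i from Subtype.ext hwg]

end DirectSumLemmas

/-- An exact complex of free modules over a principal ideal domain is contractible. -/
theorem LinearMap.exists_contraction {R : Type*} [CommRing R] [IsDomain R]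
    [IsPrincipalIdealRing R] {N : ℤ → Type*} [∀ i, AddCommGroup (N i)] [∀ i, Module R (N i)]
    [∀ i, Module.Free R (N i)] (d : ∀ i j, N i →ₗ[R] N j)
    (hd : ∀ i j k, j + 1 = i → k + 1 = j → ∀ x, d j k x = 0 ↔ ∃ w, d i j w = x) :
    ∃ s : ∀ i j, N i →ₗ[R] N j,
      ∀ i j k, j + 1 = i → k + 1 = j → ∀ x, d i j (s j i x) + s k j (d j k x) = x := by
  have hfree : ∀ i j, Module.Free R (LinearMap.range (d i j)) := fun i j =>
    Submodule.free_of_isPrincipalIdealRing _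
  have hσ : ∀ i j, ∃ σ : LinearMap.range (d i j) →ₗ[R] N i, ∀ y, d i j (σ y) = y := fun i j => by
    obtain ⟨σ, hσ⟩ := Module.projective_lifting_property (d i j).rangeRestrict LinearMap.id
      (d i j).surjective_rangeRestrict
    exact ⟨σ, fun y => congrArg Subtype.val (LinearMap.congr_fun hσ y)⟩
  choose σ hσ using hσ
  let K : ∀ j, N j →ₗ[R] N j := fun j =>
    LinearMap.id - σ j (j - 1) ∘ₗ (d j (j - 1)).rangeRestrict
  have hK : ∀ j x, K j x = x - σ j (j - 1) ((d j (j - 1)).rangeRestrict x) := fun _ _ => rfl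
  have hKd : ∀ i j, j + 1 = i → ∀ x, ∃ y, d i j y = K j x := fun i j hij x => by
    refine (hd i j (j - 1) hij (sub_add_cancel j 1) _).1 ?_
    rw [hK, map_sub, hσ]
    exact sub_self _
  have hS : ∀ j i, ∃ S : N j →ₗ[R] N i, j + 1 = i →
      ∀ x y, d i j y = K j x → S x = σ i j ((d i j).rangeRestrict y) := fun j i => by
    by_cases hij : j + 1 = i
    · refine ⟨σ i j ∘ₗ (K j).codRestrict _ (hKd i j hij), fun _ x y hxy => ?_⟩
      exact congrArg (σ i j) (Subtype.ext hxy.symm)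
    · exact ⟨0, fun h => absurd h hij⟩
  choose s hs using hS
  refine ⟨s, fun i j k hij hjk x => ?_⟩
  obtain rfl : k = j - 1 := by omega
  obtain ⟨y, hy⟩ := hKd i j hij x
  have hx : K (j - 1) (d j (j - 1) x) = d j (j - 1) x := by
    rw [hK, show (d (j - 1) (j - 1 - 1)).rangeRestrict (d j (j - 1) x) = 0 from
      Subtype.ext ((hd j (j - 1) (j - 1 - 1) hjk (sub_add_cancel _ 1) _).2 ⟨x, rfl⟩), map_zero,
      sub_zero]
  rw [hs j i hij x y hy, hσ, hs (j - 1) j hjk _ x hx.symm]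
  change d i j y + _ = x
  rw [hy, hK, sub_add_cancel]

/-- Let `π` be a map from a complex `A` of free modules over a principal ideal domain to its
homology, extending the projection of the cycles. Then the kernel of the map induced by `π` on
tensor products with a complex of free modules is exact. -/
theorem TotalTensor.exists_of_map_eq_zero {R : Type*} [CommRing R] [IsDomain R]
    [IsPrincipalIdealRing R] {A H E : ℤ → Type*}
    [∀ i, AddCommGroup (A i)] [∀ i, Module R (A i)] [∀ i, Module.Free R (A i)]
    [∀ i, AddCommGroup (H i)] [∀ i, Module R (H i)]
    [∀ i, AddCommGroup (E i)] [∀ i, Module R (E i)] [∀ i, Module.Free R (E i)]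
    (dA : ∀ i j, A i →ₗ[R] A j) (dE : ∀ i j, E i →ₗ[R] E j) (π : ∀ i, A i →ₗ[R] H i)
    (hπd : ∀ i j x, π j (dA i j x) = 0)
    (hex : ∀ i j k, j + 1 = i → k + 1 = j → ∀ x,
      dA j k x = 0 ∧ π j x = 0 ↔ ∃ w, dA i j w = x)
    (hπ : ∀ j k, k + 1 = j → ∀ h, ∃ z, dA j k z = 0 ∧ π j z = h)
    {l n m : ℤ} (hl : n + 1 = l) (hm : m + 1 = n) (v : TotalTensor R A E n)
    (hv : map π n v = 0) (hdv : d dA dE n m hm v = 0) :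
    ∃ w, map π l w = 0 ∧ d dA dE l n hl w = v := by
  let N : ℤ → Type _ := fun i => LinearMap.ker (π i)
  let u : ∀ i, N i →ₗ[R] A i := fun i => (LinearMap.ker (π i)).subtype
  let dN : ∀ i j, N i →ₗ[R] N j := fun i j =>
    (dA i j ∘ₗ u i).codRestrict _ fun x => hπd i j _
  have hfree : ∀ i, Module.Free R (N i) := fun i => Submodule.free_of_isPrincipalIdealRing _
  have hN : ∀ i j k, j + 1 = i → k + 1 = j → ∀ x, dN j k x = 0 ↔ ∃ w, dN i j w = x := by
    rintro i j k hij hjk ⟨x, hx⟩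
    rw [Subtype.ext_iff]
    refine Iff.trans (show _ ↔ dA j k x = 0 ∧ π j x = 0 from ⟨fun h => ⟨h, hx⟩, And.left⟩)
      ((hex i j k hij hjk x).trans ⟨?_, fun ⟨w, hw⟩ => ⟨w, congrArg Subtype.val hw⟩⟩)
    rintro ⟨w, rfl⟩
    obtain ⟨z, hz, hzw⟩ := hπ i j hij (π i w)
    refine ⟨⟨w - z, ?_⟩, Subtype.ext ?_⟩
    · rw [LinearMap.mem_ker, map_sub, hzw, sub_self]
    · change dA i j (w - z) = _
      rw [map_sub, hz, sub_zero]
  obtain ⟨s, hs⟩ := LinearMap.exists_contraction dN hN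
  have hu : ∀ {i j : ℤ} (h : j + 1 = i) (t : TotalTensor R N E i),
      map u j (d dN dE i j h t) = d dA dE i j h (map u i t) := fun h t =>
    map_d dN dA dE u (fun _ _ _ _ => rfl) h t
  have hinj : Function.Injective (map (R := R) (E := E) u m) :=
    (DirectSum.lmap_injective _).2 fun i =>
      Module.Flat.rTensor_preserves_injective_linearMap _ (Submodule.subtype_injective _)
  obtain ⟨v, rfl⟩ : ∃ v', map u n v' = v := by
    refine (DirectSum.mem_range_lmap_iff _ _).2 fun i => ?_
    refine (rTensor_exact (E (n - i)) (f := u i) (g := π i) ?_ ?_ _).1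
      ((DirectSum.lmap_eq_zero_iff _ _).1 hv i)
    · exact LinearMap.exact_subtype_ker_map _
    · exact fun h => (hπ i (i - 1) (sub_add_cancel i 1) h).imp fun _ => And.right
  have hdv' : d dN dE n m hm v = 0 := hinj (by rw [hu, hdv, map_zero])
  refine ⟨map u l (homotopy s n l hl v), ?_, ?_⟩
  · refine (DirectSum.lmap_eq_zero_iff _ _).2 fun i => ?_
    refine (rTensor_exact (E (l - i)) (f := u i) (g := π i) ?_ ?_ _).2 ⟨_, rfl⟩
    · exact LinearMap.exact_subtype_ker_map _
    · exact fun h => (hπ i (i - 1) (sub_add_cancel i 1) h).imp fun _ => And.right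
  · rw [← hu]
    conv_rhs => rw [← d_homotopy_add_homotopy_d dN dE s hs hl hm v, hdv', map_zero, add_zero]

/-- A surjective map of complexes with exact kernel identifies the homologies; here this is phrased
for homology presented as a quotient of the cycles. -/
theorem LinearMap.exists_ker_to_of_exact {R : Type*} [CommRing R] {T₂ T₁ T₀ U₂ U₁ U₀ P : Type*}
    [AddCommGroup T₂] [Module R T₂] [AddCommGroup T₁] [Module R T₁] [AddCommGroup T₀] [Module R T₀]
    [AddCommGroup U₂] [Module R U₂] [AddCommGroup U₁] [Module R U₁] [AddCommGroup U₀] [Module R U₀]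
    [AddCommGroup P] [Module R P] {a : T₂ →ₗ[R] T₁} {b : T₁ →ₗ[R] T₀}
    {a' : U₂ →ₗ[R] U₁} {b' : U₁ →ₗ[R] U₀} {φ₂ : T₂ →ₗ[R] U₂} {φ₁ : T₁ →ₗ[R] U₁}
    {φ₀ : T₀ →ₗ[R] U₀} (ha : ∀ t, φ₁ (a t) = a' (φ₂ t)) (hb : ∀ t, φ₀ (b t) = b' (φ₁ t))
    (hab : ∀ t, b (a t) = 0) (hφ₂ : Function.Surjective φ₂) (hφ₁ : Function.Surjective φ₁)
    (h₁ : ∀ t, φ₁ t = 0 → b t = 0 → ∃ w, a w = t)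
    (h₀ : ∀ t, φ₀ (b t) = 0 → ∃ w, φ₁ w = 0 ∧ b w = b t)
    (Θ : LinearMap.ker b' →ₗ[R] P) (hΘ : Function.Surjective Θ)
    (hΘ' : ∀ z, Θ z = 0 ↔ ∃ w, a' w = z) :
    ∃ Ξ : LinearMap.ker b →ₗ[R] P, Function.Surjective Ξ ∧ ∀ z, Ξ z = 0 ↔ ∃ w, a w = z := by
  have hφ : ∀ t ∈ LinearMap.ker b, φ₁ t ∈ LinearMap.ker b' := fun t ht => by
    rw [LinearMap.mem_ker, ← hb, LinearMap.mem_ker.1 ht, map_zero]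
  refine ⟨Θ ∘ₗ φ₁.restrict hφ, fun p => ?_, fun ⟨z, hz⟩ => ?_⟩
  · obtain ⟨⟨u, hu⟩, rfl⟩ := hΘ p
    obtain ⟨t, rfl⟩ := hφ₁ u
    obtain ⟨w, hw, hwt⟩ := h₀ t ((hb t).trans hu)
    refine ⟨⟨t - w, ?_⟩, congrArg Θ (Subtype.ext ?_)⟩
    · rw [LinearMap.mem_ker, map_sub, hwt, sub_self]
    · change φ₁ (t - w) = φ₁ t
      rw [map_sub, hw, sub_zero]
  · rw [LinearMap.comp_apply, hΘ']
    constructor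
    · rintro ⟨u, hu⟩
      obtain ⟨t, rfl⟩ := hφ₂ u
      have hu' : a' (φ₂ t) = φ₁ z := hu
      obtain ⟨w, hw⟩ := h₁ (z - a t) (by rw [map_sub, ha, hu', sub_self])
        (by rw [map_sub, hab, LinearMap.mem_ker.1 hz, sub_zero])
      exact ⟨w + t, by rw [map_add, hw, sub_add_cancel]⟩
    · rintro ⟨w, rfl⟩
      exact ⟨φ₂ w, (ha w).symm⟩

section Kunneth

variable {R : Type u} [CommRing R] [IsDomain R] [IsPrincipalIdealRing R]
  (C D : ChainComplex (ModuleCat.{u} R) ℤ)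

/-- The universal coefficient theorem, for differentials modified by signs. -/
theorem ChainComplex.exists_ker_units_smul_lTensor_to_prod (hC : ∀ i, Module.Free R (C.X i))
    (X : ModuleCat.{u} R) {i j k : ℤ} (hij : j + 1 = i) (hjk : k + 1 = j) (ε δ : ℤˣ) :
    ∃ Θ : LinearMap.ker ((ε : ℤ) • (C.d j k).hom.lTensor X) →ₗ[R]
        (X ⊗[R] C.homology j) × (((Tor (ModuleCat R) 1).obj X).obj (C.homology k)),
      Function.Surjective Θ ∧
        ∀ z, Θ z = 0 ↔ ∃ w, ((δ : ℤ) • (C.d i j).hom.lTensor X) w = z := by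
  obtain ⟨Θ, hΘ, hΘ'⟩ := C.exists_ker_lTensor_to_prod hC X hij hjk
  have h : LinearMap.ker ((ε : ℤ) • (C.d j k).hom.lTensor X) =
      LinearMap.ker ((C.d j k).hom.lTensor X) := by
    ext t
    exact smul_eq_zero_iff_eq ε
  refine ⟨Θ ∘ₗ (LinearEquiv.ofEq _ _ h).toLinearMap,
    hΘ.comp (LinearEquiv.ofEq _ _ h).surjective, fun z => (hΘ' _).trans ⟨?_, ?_⟩⟩
  · rintro ⟨w, hw⟩
    refine ⟨(δ⁻¹ : ℤˣ) • w, ?_⟩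
    change δ • ((C.d i j).hom.lTensor X) ((δ⁻¹ : ℤˣ) • w) = _
    rw [Units.smul_def (δ⁻¹ : ℤˣ), map_zsmul, ← Units.smul_def, smul_inv_smul, hw]
    rfl
  · rintro ⟨w, hw⟩
    exact ⟨(δ : ℤ) • w, (map_zsmul _ _ _).trans hw⟩

/-- The tensor product of the homology of `C` with a complex `D` of free modules satisfies the
universal coefficient theorem. -/
theorem TotalTensor.exists_ker_d_zero_to_prod (hD : ∀ i, Module.Free R (D.X i))
    (X : ℤ → ModuleCat.{u} R) {l n m : ℤ} (hl : n + 1 = l) (hm : m + 1 = n) :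
    ∃ Θ : LinearMap.ker (d (fun i j => (0 : X i →ₗ[R] X j)) (fun i j => (D.d i j).hom) n m hm) →ₗ[R]
        (⨁ i, X i ⊗[R] D.homology (n - i)) ×
          (⨁ i, ↥(((Tor (ModuleCat R) 1).obj (X i)).obj (D.homology (m - i)))),
      Function.Surjective Θ ∧ ∀ z, Θ z = 0 ↔
        ∃ w, d (fun i j => (0 : X i →ₗ[R] X j)) (fun i j => (D.d i j).hom) l n hl w = z := by
  rw [d_zero_left, d_zero_left]
  choose Θ hΘ hΘ' using fun i => D.exists_ker_units_smul_lTensor_to_prod hD (X i)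
    (show n - i + 1 = l - i by omega) (show m - i + 1 = n - i by omega)
    (Int.negOnePow i) (Int.negOnePow i)
  obtain ⟨Ξ, hΞ, hΞ'⟩ := DirectSum.exists_ker_to_prod _ Θ hΘ
  refine ⟨Ξ, hΞ, fun z => (hΞ' z).trans (Iff.trans (forall_congr' fun i => ?_)
    (DirectSum.mem_range_lmap_iff _ _).symm)⟩
  constructor
  · rintro ⟨w, hw, hwz⟩
    rw [← hwz]
    exact (hΘ' i w).1 hw
  · rintro ⟨w, hw⟩
    have hz := (DirectSum.lmap_eq_zero_iff _ _).1 z.2 i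
    exact ⟨⟨_, hz⟩, (hΘ' i _).2 ⟨w, hw⟩, rfl⟩

/-- The Künneth theorem for the tensor product of complexes of free modules over a principal ideal
domain, phrased for homology presented as a quotient of the cycles. -/
theorem TotalTensor.exists_ker_d_to_prod (hC : ∀ i, Module.Free R (C.X i))
    (hD : ∀ i, Module.Free R (D.X i)) {l n m : ℤ} (hl : n + 1 = l) (hm : m + 1 = n) :
    ∃ Θ : LinearMap.ker (d (fun i j => (C.d i j).hom) (fun i j => (D.d i j).hom) n m hm) →ₗ[R]
        (⨁ i, C.homology i ⊗[R] D.homology (n - i)) ×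
          (⨁ i, ↥(((Tor (ModuleCat R) 1).obj (C.homology i)).obj (D.homology (m - i)))),
      Function.Surjective Θ ∧ ∀ z, Θ z = 0 ↔
        ∃ w, d (fun i j => (C.d i j).hom) (fun i j => (D.d i j).hom) l n hl w = z := by
  choose π hπ hπ' using fun j : ℤ => C.exists_homology_projection hC (i := j + 1)
    (j := j) (k := j - 1) rfl (sub_add_cancel j 1)
  have hex : ∀ i j k : ℤ, j + 1 = i → k + 1 = j → ∀ x,
      (C.d j k).hom x = 0 ∧ π j x = 0 ↔ ∃ w, (C.d i j).hom w = x := by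
    rintro i j k rfl hjk
    obtain rfl : k = j - 1 := by omega
    exact hπ j
  have hπ'' : ∀ j k : ℤ, k + 1 = j → ∀ h, ∃ z, (C.d j k).hom z = 0 ∧ π j z = h := by
    intro j k hjk
    obtain rfl : k = j - 1 := by omega
    exact hπ' j
  have hπd : ∀ i j x, π j ((C.d i j).hom x) = 0 := by
    intro i j x
    by_cases h : j + 1 = i
    · exact ((hex i j (j - 1) h (sub_add_cancel j 1) _).2 ⟨x, rfl⟩).2
    · rw [C.shape i j h]
      exact map_zero _
  have hmap : ∀ {i j : ℤ} (h : j + 1 = i) t, map π j (d (fun i j => (C.d i j).hom)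
      (fun i j => (D.d i j).hom) i j h t) = d (fun i j => (0 : C.homology i →ₗ[R] C.homology j))
        (fun i j => (D.d i j).hom) i j h (map π i t) := fun h t =>
    map_d _ _ _ _ (fun i j _ x => hπd i j x) h t
  have hdd : ∀ {i j k : ℤ} (h : j + 1 = i) (h' : k + 1 = j) t,
      d (fun i j => (C.d i j).hom) (fun i j => (D.d i j).hom) j k h' (d (fun i j => (C.d i j).hom)
        (fun i j => (D.d i j).hom) i j h t) = 0 := fun h h' t =>
    d_d _ _ (fun i j k _ _ x => congr($(C.d_comp_d i j k).hom x))
      (fun i j k _ _ x => congr($(D.d_comp_d i j k).hom x)) h h' t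
  have hsurj : ∀ n, Function.Surjective (map (R := R) (E := fun i => D.X i) π n) := fun n =>
    (DirectSum.lmap_surjective _).2 fun i => LinearMap.rTensor_surjective _
      fun h => (hπ' i h).imp fun _ => And.right
  obtain ⟨Θ, hΘ, hΘ'⟩ := exists_ker_d_zero_to_prod D hD (fun i => C.homology i) hl hm
  refine LinearMap.exists_ker_to_of_exact (hmap hl) (hmap hm) (hdd hl hm) (hsurj l) (hsurj n)
    (fun t ht ht' => ?_) (fun t ht => ?_) Θ hΘ hΘ'
  · exact (exists_of_map_eq_zero _ _ π hπd hex hπ'' hl hm t ht ht').imp fun _ => And.right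
  · exact exists_of_map_eq_zero _ _ π hπd hex hπ'' hm (sub_add_cancel m 1) _ ht (hdd _ _ t)

end Kunneth

/-- **Künneth theorem over a PID.**  Let `R` be a PID and `C`, `D` chain complexes of
free `R`-modules.  Let `T` be (any model of) the tensor product complex `C ⊗ D`: a chain
complex together with maps `ι n i : C_i ⊗ D_{n-i} → T_n` exhibiting `T_n` as the direct
sum `⊕_{i+j=n} C_i ⊗ D_j`, whose differential is `∂(x ⊗ y) = ∂x ⊗ y + (−1)^i x ⊗ ∂y`.
Then for each `k` there is a split short exact sequence
`0 → ⊕_{i+j=k} H_i(C) ⊗ H_j(D) → H_k(C ⊗ D) → ⊕_{i+j=k−1} Tor₁(H_i(C), H_j(D)) → 0`. -/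
theorem kunneth_over_PID (R : Type) [CommRing R] [IsDomain R] [IsPrincipalIdealRing R]
    (C D : ChainComplex (ModuleCat R) ℤ)
    (hC : ∀ i, Module.Free R (C.X i)) (hD : ∀ i, Module.Free R (D.X i))
    (T : ChainComplex (ModuleCat R) ℤ)
    (ι : ∀ n i : ℤ, (↥(C.X i) ⊗[R] ↥(D.X (n - i))) →ₗ[R] ↥(T.X n))
    (hsum : ∀ n : ℤ, Function.Bijective
      (DirectSum.toModule R ℤ ↥(T.X n) (fun i : ℤ => ι n i)))
    (hd : ∀ (n i : ℤ) (x : ↥(C.X i)) (y : ↥(D.X (n - i))),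
      T.d n (n - 1) (ι n i (x ⊗ₜ[R] y)) =
        ι (n - 1) (i - 1) ((C.d i (i - 1) x) ⊗ₜ[R]
          ((eqToHom (congrArg D.X (by omega : n - i = n - 1 - (i - 1)))) y)) +
        ((Int.negOnePow i : ℤˣ) : ℤ) • ι (n - 1) i (x ⊗ₜ[R] (D.d (n - i) (n - 1 - i) y)))
    (k : ℤ) :
    ∃ (f : (⨁ i : ℤ, (↥(C.homology i) ⊗[R] ↥(D.homology (k - i)))) →ₗ[R]
        ↥(T.homology k))
      (g : ↥(T.homology k) →ₗ[R]
        (⨁ i : ℤ, ↥(((Tor (ModuleCat R) 1).obj (C.homology i)).obj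
          (D.homology (k - 1 - i))))),
      Function.Injective f ∧ Function.Surjective g ∧ Function.Exact f g ∧
        ∃ s : (⨁ i : ℤ, ↥(((Tor (ModuleCat R) 1).obj (C.homology i)).obj
            (D.homology (k - 1 - i)))) →ₗ[R] ↥(T.homology k),
          g.comp s = LinearMap.id := by
  let dC : ∀ i j, C.X i →ₗ[R] C.X j := fun i j => (C.d i j).hom
  let dD : ∀ i j, D.X i →ₗ[R] D.X j := fun i j => (D.d i j).hom
  let τ : ∀ n, TotalTensor R (fun i => C.X i) (fun i => D.X i) n ≃ₗ[R] T.X n := fun n =>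
    LinearEquiv.ofBijective (DirectSum.toModule R ℤ (T.X n) (ι n)) (hsum n)
  have hτ : ∀ {i j n : ℤ} (h : i + j = n) (h' : j = n - i) (x : C.X i) (y : D.X j),
      τ n (TotalTensor.incl R _ _ i j n h (x ⊗ₜ y)) =
        ι n i (x ⊗ₜ (eqToHom (congrArg D.X h')) y) := by
    rintro i j n h rfl x y
    exact DirectSum.toModule_lof (φ := ι n) R i _
  have hτd : ∀ {n m : ℤ} (h : m + 1 = n) t,
      (T.d n m).hom (τ n t) = τ m (TotalTensor.d dC dD n m h t) := by
    intro n m h t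
    obtain rfl : m = n - 1 := by omega
    suffices H : (T.d n (n - 1)).hom ∘ₗ (τ n).toLinearMap =
        (τ (n - 1)).toLinearMap ∘ₗ TotalTensor.d dC dD n (n - 1) h from LinearMap.congr_fun H t
    refine TotalTensor.hom_ext fun i j hij x y => ?_
    obtain rfl : j = n - i := by omega
    simp only [LinearMap.comp_apply, LinearEquiv.coe_coe]
    rw [TotalTensor.d_incl dC dD h hij (sub_add_cancel i 1)
      (show n - 1 - i + 1 = n - i by omega), map_add, map_zsmul, hτ _ rfl, hτ _ (by omega),
      hτ _ rfl]
    exact hd n i x y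
  obtain ⟨Θ, hΘ, hΘ'⟩ := TotalTensor.exists_ker_d_to_prod C D hC hD (l := k + 1) (n := k)
    (m := k - 1) rfl (sub_add_cancel k 1)
  obtain ⟨p, hp, hp'⟩ := T.exists_ker_to_homology (i := k + 1) (j := k) (k := k - 1) (by simp)
    (by simp)
  have hker : ∀ z ∈ LinearMap.ker (T.d k (k - 1)).hom,
      (τ k).symm z ∈ LinearMap.ker (TotalTensor.d dC dD k (k - 1) (sub_add_cancel k 1)) := by
    intro z hz
    refine (τ (k - 1)).injective ?_
    rw [← hτd, LinearEquiv.apply_symm_apply, map_zero]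
    exact hz
  let Ξ := Θ ∘ₗ (τ k).symm.toLinearMap.restrict hker
  have hΞ : Function.Surjective Ξ := by
    intro q
    obtain ⟨⟨z, hz⟩, rfl⟩ := hΘ q
    refine ⟨⟨τ k z, ?_⟩, congrArg Θ (Subtype.ext ((τ k).symm_apply_apply z))⟩
    rw [LinearMap.mem_ker, hτd (sub_add_cancel k 1)]
    exact (congrArg (τ (k - 1)) hz).trans (map_zero _)
  have hΞp : LinearMap.ker p = LinearMap.ker Ξ := by
    ext z
    rw [LinearMap.mem_ker, LinearMap.mem_ker, hp', LinearMap.comp_apply, hΘ']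
    constructor
    · rintro ⟨w, hw⟩
      refine ⟨(τ (k + 1)).symm w, (τ k).injective ?_⟩
      rw [← hτd, LinearEquiv.apply_symm_apply, hw]
      exact ((τ k).apply_symm_apply _).symm
    · rintro ⟨w, hw⟩
      refine ⟨τ (k + 1) w, ?_⟩
      rw [hτd rfl]
      exact (congrArg (τ k) hw).trans ((τ k).apply_symm_apply _)
  let e := ((p.quotKerEquivOfSurjective hp).symm.trans
    (Submodule.quotEquivOfEq _ _ hΞp)).trans (Ξ.quotKerEquivOfSurjective hΞ)
  refine ⟨e.symm.toLinearMap ∘ₗ LinearMap.inl R _ _, LinearMap.snd R _ _ ∘ₗ e.toLinearMap,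
    e.symm.injective.comp LinearMap.inl_injective,
    (LinearMap.snd_surjective (R := R)).comp e.surjective,
    fun x => ⟨fun hx => ?_, ?_⟩, e.symm.toLinearMap ∘ₗ LinearMap.inr R _ _, ?_⟩
  · refine ⟨(e x).1, e.injective ((e.apply_symm_apply _).trans (Prod.ext rfl ?_))⟩
    exact hx.symm
  · rintro ⟨y, rfl⟩
    exact congrArg Prod.snd (e.apply_symm_apply (LinearMap.inl R _ _ y))
  · refine LinearMap.ext fun y => ?_
    exact congrArg Prod.snd (e.apply_symm_apply (LinearMap.inr R _ _ y))
end
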